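/- arXiv:1604.00316 — 5 statements merged into one kernel-verified Lean document; each statement's English description precedes it below -/
import Mathlib

section
/- Let p be a positive rational number with √p irrational, and let a, b, e, f be rational numbers with b ≠ 0, a + b√p > 0, and e + f√p > 0. Suppose that either (a − b√p > 0 and a·|f| > e·|b|) or (a − b√p < 0 and b·|e| > f·|a|). Then (a² − p·b²)·(e²·b² − f²·a²) < 0. -/
/-- The discriminant computation: under the stated sign hypotheses, the
discriminant `(a² - p·b²)·(e²·b² - f²·a²)` is negative. -/
theorem stmt_13 (p : ℚ) (hp : 0 < p) (hirr : Irrational (Real.sqrt p))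
    (a b e f : ℚ) (hb : b ≠ 0)
    (hx : (0 : ℝ) < (a : ℝ) + (b : ℝ) * Real.sqrt p)
    (hz : (0 : ℝ) < (e : ℝ) + (f : ℝ) * Real.sqrt p)
    (hcase : (0 < (a : ℝ) - (b : ℝ) * Real.sqrt p ∧ e * |b| < a * |f|) ∨
             ((a : ℝ) - (b : ℝ) * Real.sqrt p < 0 ∧ f * |a| < b * |e|)) :
    (a ^ 2 - p * b ^ 2) * (e ^ 2 * b ^ 2 - f ^ 2 * a ^ 2) < 0 := by
  have hpR : (0 : ℝ) < p := by exact_mod_cast hp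
  have hs : 0 < Real.sqrt p := Real.sqrt_pos.2 hpR
  have hss : Real.sqrt p ^ 2 = p := Real.sq_sqrt hpR.le
  have hbR : (b : ℝ) ≠ 0 := by exact_mod_cast hb
  have hcase' : (0 < (a : ℝ) - (b : ℝ) * Real.sqrt p ∧ (e : ℝ) * |(b : ℝ)| < a * |(f : ℝ)|) ∨
             ((a : ℝ) - (b : ℝ) * Real.sqrt p < 0 ∧ (f : ℝ) * |(a : ℝ)| < b * |(e : ℝ)|) := by
    rcases hcase with ⟨h, h'⟩ | ⟨h, h'⟩
    · exact Or.inl ⟨h, by exact_mod_cast h'⟩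
    · exact Or.inr ⟨h, by exact_mod_cast h'⟩
  suffices H : ((a : ℝ) ^ 2 - p * (b : ℝ) ^ 2) * ((e : ℝ) ^ 2 * (b : ℝ) ^ 2 - (f : ℝ) ^ 2 * (a : ℝ) ^ 2) < 0 by
    exact_mod_cast H
  rw [← hss]
  clear hcase hss hirr
  generalize Real.sqrt p = s at *
  generalize (a : ℝ) = a at *
  generalize (b : ℝ) = b at *
  generalize (e : ℝ) = e at *
  generalize (f : ℝ) = f at *
  have hb' : 0 < |b| := abs_pos.2 hbR
  rcases hcase' with ⟨h, h'⟩ | ⟨h, h'⟩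
  · have ha : 0 < a := by linarith
    have hN : 0 < a ^ 2 - s ^ 2 * b ^ 2 := by nlinarith [mul_pos hx h]
    have hbs : |b| * s < a := by
      rcases abs_cases b with ⟨h1, _⟩ | ⟨h1, _⟩ <;> rw [h1] <;> linarith
    have key : |e| * |b| < |f| * a := by
      rcases le_or_gt 0 e with he | he
      · rw [abs_of_nonneg he]; linarith
      · have hf : 0 < f := by
          by_contra hf
          nlinarith
        rw [abs_of_neg he, abs_of_pos hf]
        have h1 : -e * |b| < f * s * |b| := mul_lt_mul_of_pos_right (by linarith) hb'
        have h2 : f * (|b| * s) < f * a := mul_lt_mul_of_pos_left hbs hf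
        linarith
    have h2 : (|e| * |b|) ^ 2 < (|f| * a) ^ 2 := pow_lt_pow_left₀ key (by positivity) (by norm_num)
    simp only [mul_pow, sq_abs] at h2
    exact mul_neg_of_pos_of_neg hN (by linarith)
  · have hbp : 0 < b := by
      by_contra hf
      nlinarith
    have hN : a ^ 2 - s ^ 2 * b ^ 2 < 0 := by nlinarith [mul_pos hx (neg_pos.2 h)]
    have has : |a| < b * s := abs_lt.2 ⟨by linarith, by linarith⟩
    have key : |f| * |a| < |e| * b := by
      rcases le_or_gt 0 f with hf | hf
      · rw [abs_of_nonneg hf]; linarith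
      · have he : 0 < e := by nlinarith
        rw [abs_of_neg hf, abs_of_pos he]
        have h1 : -f * |a| < -f * (b * s) := mul_lt_mul_of_pos_left has (by linarith)
        have h2 : (-f * s) * b < e * b := mul_lt_mul_of_pos_right (by linarith) hbp
        linarith
    have h2 : (|f| * |a|) ^ 2 < (|e| * b) ^ 2 := pow_lt_pow_left₀ key (by positivity) (by norm_num)
    simp only [mul_pow, sq_abs] at h2
    exact mul_neg_of_neg_of_pos hN (by linarith)
end

section
/- Let p be a positive rational number with √p irrational, and let x₁ = a₁ + b₁√p, …, xₙ = aₙ + bₙ√p where each xᵢ > 0, all aᵢ, bᵢ are rational, and aᵢ − bᵢ√p > 0 for every i (so each aᵢ > 0). If k ∈ {1, …, n} satisfies |b_k|/a_k = max_{1 ≤ i ≤ n} |bᵢ|/aᵢ, then B(x₁, …, xₙ) = B(x_k); in particular, every rectangle that can be tiled by rectangles with side ratios x₁, …, xₙ can be tiled by rectangles with side ratio x_k alone. -/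
/-- `R` is an axis-parallel closed rectangle with side lengths `w` (horizontal)
and `h` (vertical), both positive. -/
def IsRect (R : Set (ℝ × ℝ)) (w h : ℝ) : Prop :=
  0 < w ∧ 0 < h ∧ ∃ x y : ℝ, R = Set.Icc x (x + w) ×ˢ Set.Icc y (y + h)

/-- The rectangle `R` is tiled by finitely many axis-parallel rectangles, each of
whose side ratios belongs to `ratios`: the tiles cover `R` and have pairwise
disjoint interiors. -/
def TiledBy (R : Set (ℝ × ℝ)) (ratios : Set ℝ) : Prop :=
  ∃ (m : ℕ) (T : Fin m → Set (ℝ × ℝ)) (w h : Fin m → ℝ),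
    (∀ i, IsRect (T i) (w i) (h i)) ∧
    (∀ i, w i / h i ∈ ratios ∨ h i / w i ∈ ratios) ∧
    (⋃ i, T i) = R ∧
    Pairwise fun i j => Disjoint (interior (T i)) (interior (T j))

/-- `BSet ratios` is the set of positive reals `z` such that some axis-parallel
rectangle with side ratio `z` can be tiled by finitely many axis-parallel
rectangles each of whose side ratio belongs to `ratios`. -/
def BSet (ratios : Set ℝ) : Set ℝ :=
  {z | ∃ (W H : ℝ) (R : Set (ℝ × ℝ)),
    IsRect R W H ∧ (z = W / H ∨ z = H / W) ∧ TiledBy R ratios}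

open MeasureTheory in
lemma rect_null_aux (x y w h : ℝ) :
    volume (frontier (Set.Icc x (x + w) ×ˢ Set.Icc y (y + h) : Set (ℝ × ℝ))) = 0 :=
  ((convex_Icc _ _).prod (convex_Icc _ _)).addHaar_frontier volume

lemma interp_aux (s : Finset ℝ) (f : ℝ → ℝ) :
    ∃ q : Polynomial ℝ, ∀ x ∈ s, q.eval x = f x :=
  ⟨Lagrange.interpolate s id f, fun x hx => by
    simpa using Lagrange.eval_interpolate_at_node (s := s) (v := id) f (Set.injOn_id _) hx⟩

open MeasureTheory in
lemma rect_int_aux (q r : Polynomial ℝ) (x y w h : ℝ) (hw : 0 < w) (hh : 0 < h) :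
    ∫ z in (Set.Icc x (x + w) ×ˢ Set.Icc y (y + h) : Set (ℝ × ℝ)),
      q.derivative.eval z.1 * r.derivative.eval z.2 =
    (q.eval (x + w) - q.eval x) * (r.eval (y + h) - r.eval y) := by
  have key : ∀ (q : Polynomial ℝ) (x w : ℝ), 0 < w →
      ∫ t in Set.Icc x (x + w), q.derivative.eval t = q.eval (x + w) - q.eval x := by
    intro q x w hw
    rw [integral_Icc_eq_integral_Ioc, ← intervalIntegral.integral_of_le (by linarith)]
    apply intervalIntegral.integral_eq_sub_of_hasDerivAt (f := fun t => q.eval t)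
    · intro t _
      exact q.hasDerivAt t
    · exact (Polynomial.continuous _).intervalIntegrable _ _
  rw [Measure.volume_eq_prod, setIntegral_prod_mul (fun t => q.derivative.eval t)
    (fun t => r.derivative.eval t), key q x w hw, key r y h hh]

open MeasureTheory in
lemma tile_sum_aux (m : ℕ) (x y w h : Fin m → ℝ) (X Y W H : ℝ)
    (hw : ∀ i, 0 < w i) (hh : ∀ i, 0 < h i) (hW : 0 < W) (hH : 0 < H)
    (hU : (⋃ i, (Set.Icc (x i) (x i + w i) ×ˢ Set.Icc (y i) (y i + h i) : Set (ℝ × ℝ))) =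
      Set.Icc X (X + W) ×ˢ Set.Icc Y (Y + H))
    (hd : Pairwise fun i j =>
      Disjoint (interior (Set.Icc (x i) (x i + w i) ×ˢ Set.Icc (y i) (y i + h i) : Set (ℝ × ℝ)))
        (interior (Set.Icc (x j) (x j + w j) ×ˢ Set.Icc (y j) (y j + h j))))
    (f g : ℝ → ℝ) :
    ∑ i, (f (x i + w i) - f (x i)) * (g (y i + h i) - g (y i)) =
      (f (X + W) - f X) * (g (Y + H) - g Y) := by
  classical
  obtain ⟨q, hq⟩ := interp_aux (insert X (insert (X + W)
    (Finset.univ.image x ∪ Finset.univ.image (fun i => x i + w i)))) f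
  obtain ⟨r, hr⟩ := interp_aux (insert Y (insert (Y + H)
    (Finset.univ.image y ∪ Finset.univ.image (fun i => y i + h i)))) g
  have e1 : ∀ i, (f (x i + w i) - f (x i)) * (g (y i + h i) - g (y i)) =
      (q.eval (x i + w i) - q.eval (x i)) * (r.eval (y i + h i) - r.eval (y i)) := by
    intro i
    rw [hq, hq, hr, hr] <;> simp
  have e2 : (f (X + W) - f X) * (g (Y + H) - g Y) =
      (q.eval (X + W) - q.eval X) * (r.eval (Y + H) - r.eval Y) := by
    rw [hq, hq, hr, hr] <;> simp
  rw [e2, Finset.sum_congr rfl fun i _ => e1 i, ← rect_int_aux q r X Y W H hW hH, ← hU,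
    integral_iUnion_ae, tsum_fintype]
  · exact Finset.sum_congr rfl fun i _ => (rect_int_aux q r _ _ _ _ (hw i) (hh i)).symm
  · intro i
    exact (measurableSet_Icc.prod measurableSet_Icc).nullMeasurableSet
  · intro i j hij
    refine measure_mono_null (t := frontier (Set.Icc (x i) (x i + w i) ×ˢ Set.Icc (y i) (y i + h i))
      ∪ frontier (Set.Icc (x j) (x j + w j) ×ˢ Set.Icc (y j) (y j + h j))) ?_ ?_
    · rintro z ⟨h1, h2⟩
      by_contra hz
      rw [Set.mem_union, not_or] at hz
      have k1 := hz.1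
      have k2 := hz.2
      rw [(isClosed_Icc.prod isClosed_Icc).frontier_eq] at k1 k2
      have l1 := not_not.1 fun hn => k1 ⟨h1, hn⟩
      have l2 := not_not.1 fun hn => k2 ⟨h2, hn⟩
      exact Set.disjoint_left.1 (hd hij) l1 l2
    · exact measure_union_null (rect_null_aux _ _ _ _) (rect_null_aux _ _ _ _)
  · rw [hU]
    apply ContinuousOn.integrableOn_compact (isCompact_Icc.prod isCompact_Icc)
    exact (((Polynomial.continuous _).comp continuous_fst).mul
      ((Polynomial.continuous _).comp continuous_snd)).continuousOn

lemma tiled_form_aux {R : Set (ℝ × ℝ)} {ratios : Set ℝ} {W H : ℝ} (hR : IsRect R W H)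
    (hT : TiledBy R ratios) :
    ∃ (m : ℕ) (w h : Fin m → ℝ), (∀ i, 0 < w i) ∧ (∀ i, 0 < h i) ∧
      (∀ i, w i / h i ∈ ratios ∨ h i / w i ∈ ratios) ∧
      ∀ f g : ℝ →ₗ[ℚ] ℝ, ∑ i, f (w i) * g (h i) = f W * g H := by
  obtain ⟨m, T, w, h, hT1, hT2, hU, hd⟩ := hT
  obtain ⟨hW, hH, X, Y, rfl⟩ := hR
  choose hw hh x y hxy using hT1
  refine ⟨m, w, h, hw, hh, hT2, fun f g => ?_⟩
  simp only [hxy] at hU hd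
  have := tile_sum_aux m x y w h X Y W H hw hh hW hH hU hd f g
  simpa using this

lemma ext_aux {ι : Type} {v : ι → ℝ} (hv : LinearIndependent ℚ v) (y : ι → ℝ) :
    ∃ f : ℝ →ₗ[ℚ] ℝ, ∀ i, f (v i) = y i := by
  obtain ⟨f, hf⟩ := LinearMap.exists_extend ((Finsupp.linearCombination ℚ y).comp hv.repr)
  refine ⟨f, fun i => ?_⟩
  have h := LinearMap.congr_fun hf ⟨v i, Submodule.subset_span ⟨i, rfl⟩⟩
  simp only [LinearMap.comp_apply, Submodule.subtype_apply] at h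
  rw [h, hv.repr_eq_single i _ rfl]
  simp

/-- The set of numbers `c + d √p` with `0 < c` and `|d| ≤ M c`. -/
def GoodAux (p M : ℚ) : Set ℝ :=
  {z | ∃ c d : ℚ, z = c + d * Real.sqrt p ∧ 0 < c ∧ |d| ≤ M * c}

lemma irr_aux {p : ℚ} (hirr : Irrational (Real.sqrt p)) {u v : ℚ}
    (h : (u : ℝ) + v * Real.sqrt p = 0) : u = 0 ∧ v = 0 := by
  have hv : v = 0 := by
    by_contra hv
    apply hirr
    refine ⟨-u / v, ?_⟩
    have : (v : ℝ) ≠ 0 := by exact_mod_cast hv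
    push_cast
    field_simp
    linarith
  subst hv
  refine ⟨?_, rfl⟩
  simpa using h

lemma norm_aux {p M c d : ℚ} (hp : 0 < p) (hM : p * M ^ 2 < 1) (hc : 0 < c)
    (hd : |d| ≤ M * c) : 0 < c ^ 2 - p * d ^ 2 := by
  have h1 : d ^ 2 ≤ (M * c) ^ 2 := sq_le_sq' (by linarith [neg_abs_le d]) (by linarith [le_abs_self d])
  have h2 : 0 < c ^ 2 := by positivity
  nlinarith

lemma inv_aux {p M : ℚ} (hp : 0 < p) (hM : p * M ^ 2 < 1) {z : ℝ} (hz : z ∈ GoodAux p M) :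
    z⁻¹ ∈ GoodAux p M := by
  obtain ⟨c, d, rfl, hc, hd⟩ := hz
  have hN := norm_aux hp hM hc hd
  refine ⟨c / (c ^ 2 - p * d ^ 2), -d / (c ^ 2 - p * d ^ 2), ?_, by positivity, ?_⟩
  · have hs : Real.sqrt p ^ 2 = p := Real.sq_sqrt (by exact_mod_cast hp.le)
    have hN' : (0 : ℝ) < c ^ 2 - p * d ^ 2 := by exact_mod_cast hN
    apply inv_eq_of_mul_eq_one_right
    push_cast
    rw [div_add' _ _ _ hN'.ne', div_mul_eq_mul_div, div_mul_cancel₀ _ hN'.ne', mul_div_assoc', div_eq_one_iff_eq hN'.ne']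
    linear_combination (- d ^ 2 : ℝ) * hs
  · rw [abs_div, abs_neg, abs_of_pos hN, ← mul_div_assoc]
    gcongr

/-- The bilinear form. -/
noncomputable def formAux (p M : ℚ) (f : ℝ →ₗ[ℚ] ℝ) (w h : ℝ) : ℝ :=
  M ^ 2 * (f (Real.sqrt p * w) * f (Real.sqrt p * h)) + M * (f (Real.sqrt p * w) * f h) +
    M * (f w * f (Real.sqrt p * h)) + (2 - p * M ^ 2) * (f w * f h)

lemma formAux_sum {R : Set (ℝ × ℝ)} {ratios : Set ℝ} {W H : ℝ} (hR : IsRect R W H)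
    (hT : TiledBy R ratios) (p : ℚ) :
    ∃ (m : ℕ) (w h : Fin m → ℝ), (∀ i, 0 < w i) ∧ (∀ i, 0 < h i) ∧
      (∀ i, w i / h i ∈ ratios ∨ h i / w i ∈ ratios) ∧
      ∀ (M : ℚ) (f : ℝ →ₗ[ℚ] ℝ), ∑ i, formAux p M f (w i) (h i) = formAux p M f W H := by
  obtain ⟨m, w, h, hw, hh, hr, hs⟩ := tiled_form_aux hR hT
  refine ⟨m, w, h, hw, hh, hr, fun M f => ?_⟩
  let g : ℝ →ₗ[ℚ] ℝ := f.comp (LinearMap.mulLeft ℚ (Real.sqrt p))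
  have hg : ∀ x, f (Real.sqrt p * x) = g x := fun x => rfl
  simp only [formAux, hg, Finset.sum_add_distrib, ← Finset.mul_sum, hs]

lemma lin_aux {p : ℚ} (hp : 0 < p) (f : ℝ →ₗ[ℚ] ℝ) (c d : ℚ) (h : ℝ) :
    f ((c + d * Real.sqrt p) * h) = c * f h + d * f (Real.sqrt p * h) ∧
    f (Real.sqrt p * ((c + d * Real.sqrt p) * h)) = c * f (Real.sqrt p * h) + d * p * f h := by
  have hs : Real.sqrt p ^ 2 = p := Real.sq_sqrt (by exact_mod_cast hp.le)
  have e1 : ((c : ℝ) + d * Real.sqrt p) * h = c • h + d • (Real.sqrt p * h) := by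
    simp only [Rat.smul_def]; ring
  have e2 : Real.sqrt p * (((c : ℝ) + d * Real.sqrt p) * h) =
      c • (Real.sqrt p * h) + (d * p) • h := by
    simp only [Rat.smul_def]; push_cast; linear_combination (d * h : ℝ) * hs
  rw [e2, e1]
  simp only [map_add, map_smul]
  simp only [Rat.smul_def]
  constructor <;> push_cast <;> rfl

lemma formAux_nonneg {p M : ℚ} (hp : 0 < p) (hM0 : M ≠ 0) (hM : p * M ^ 2 < 1)
    (f : ℝ →ₗ[ℚ] ℝ) {r : ℝ} (hr : r ∈ GoodAux p |M|) (h : ℝ) : 0 ≤ formAux p M f (r * h) h := by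
  obtain ⟨c, d, rfl, hc, hd⟩ := hr
  obtain ⟨e1, e2⟩ := lin_aux hp f c d h
  rw [formAux, e1, e2]
  obtain ⟨e, rfl⟩ : ∃ e, d = M * e := ⟨d / M, by field_simp⟩
  have he : |e| ≤ c := by
    rw [abs_mul] at hd
    exact le_of_mul_le_mul_left hd (abs_pos.2 hM0)
  have h1 : (0 : ℝ) ≤ c + e := by exact_mod_cast (by linarith [neg_abs_le e] : 0 ≤ c + e)
  have h2 : (0 : ℝ) ≤ c - e := by exact_mod_cast (by linarith [le_abs_self e] : 0 ≤ c - e)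
  have h3 : (0 : ℝ) ≤ 1 - p * M ^ 2 := by exact_mod_cast (by linarith : 0 ≤ 1 - p * M ^ 2)
  have := add_nonneg (mul_nonneg h1 (sq_nonneg (M * f (Real.sqrt p * h) + f h)))
    (mul_nonneg (mul_nonneg h2 h3) (sq_nonneg (f h)))
  refine this.trans_eq ?_
  push_cast
  ring

lemma field_aux {p M : ℚ} (hp : 0 < p) (hirr : Irrational (Real.sqrt p)) (hM : p * M ^ 2 < 1)
    {W H : ℝ} (hH : 0 < H) (hpos : ∀ f : ℝ →ₗ[ℚ] ℝ, 0 ≤ formAux p M f W H) :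
    ∃ c d : ℚ, W = (c + d * Real.sqrt p) * H := by
  by_contra hne
  push Not at hne
  have hs : Real.sqrt p ^ 2 = p := Real.sq_sqrt (by exact_mod_cast hp.le)
  have hli : LinearIndependent ℚ ![W, Real.sqrt p * W, H, Real.sqrt p * H] := by
    rw [Fintype.linearIndependent_iff]
    intro g hg
    simp [Fin.sum_univ_four, Rat.smul_def] at hg
    have huv : g 0 = 0 ∧ g 1 = 0 := by
      by_contra hn
      have hN : (g 0 : ℝ) ^ 2 - p * g 1 ^ 2 ≠ 0 := by
        intro h0
        have h0' : ((g 0 : ℝ) + g 1 * Real.sqrt p) * ((g 0 : ℝ) + (-g 1 : ℚ) * Real.sqrt p) = 0 := by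
          push_cast; linear_combination h0 - (g 1 : ℝ) ^ 2 * hs
        rcases mul_eq_zero.1 h0' with h | h
        · exact hn (irr_aux hirr h)
        · obtain ⟨k1, k2⟩ := irr_aux hirr h
          exact hn ⟨k1, by simpa using k2⟩
      refine hne (-(g 0 * g 2 - p * g 1 * g 3) / (g 0 ^ 2 - p * g 1 ^ 2))
        (-(g 0 * g 3 - g 1 * g 2) / (g 0 ^ 2 - p * g 1 ^ 2)) ?_
      push_cast
      field_simp
      linear_combination (g 0 - g 1 * Real.sqrt p : ℝ) * hg + (W * g 1 ^ 2 + H * g 1 * g 3 : ℝ) * hs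
    obtain ⟨h0, h1⟩ := huv
    rw [h0, h1] at hg
    have : ((g 2 : ℝ) + g 3 * Real.sqrt p) = 0 := by
      have : ((g 2 : ℝ) + g 3 * Real.sqrt p) * H = 0 := by
        simp at hg
        linear_combination hg
      exact (mul_eq_zero.1 this).resolve_right hH.ne'
    obtain ⟨h2, h3⟩ := irr_aux hirr this
    intro i
    fin_cases i <;> assumption
  obtain ⟨f, hf⟩ := ext_aux hli ![-1, 0, 1, 0]
  have h0 : f W = -1 := hf 0
  have h1 : f (Real.sqrt p * W) = 0 := hf 1
  have h2 : f H = 1 := hf 2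
  have h3 : f (Real.sqrt p * H) = 0 := hf 3
  have := hpos f
  rw [formAux, h0, h1, h2, h3] at this
  have h3 : (p * M ^ 2 : ℝ) < 1 := by exact_mod_cast hM
  linarith

lemma bound_aux {p M : ℚ} (hp : 0 < p) (hirr : Irrational (Real.sqrt p))
    {H : ℝ} (hH : 0 < H) (c d : ℚ)
    (hpos : ∀ f : ℝ →ₗ[ℚ] ℝ, 0 ≤ formAux p M f ((c + d * Real.sqrt p) * H) H) :
    0 ≤ M ^ 2 * c + M * d := by
  have hli : LinearIndependent ℚ ![H, Real.sqrt p * H] := by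
    rw [Fintype.linearIndependent_iff]
    intro g hg
    simp [Fin.sum_univ_two, Rat.smul_def] at hg
    have : ((g 0 : ℝ) + g 1 * Real.sqrt p) = 0 := by
      have : ((g 0 : ℝ) + g 1 * Real.sqrt p) * H = 0 := by
        linear_combination hg
      exact (mul_eq_zero.1 this).resolve_right hH.ne'
    obtain ⟨h2, h3⟩ := irr_aux hirr this
    intro i
    fin_cases i <;> assumption
  obtain ⟨f, hf⟩ := ext_aux hli ![0, 1]
  have h2 : f H = 0 := hf 0
  have h3 : f (Real.sqrt p * H) = 1 := hf 1
  have := hpos f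
  obtain ⟨e1, e2⟩ := lin_aux hp f c d H
  rw [formAux, e1, e2, h2, h3] at this
  have h4 : (0 : ℝ) ≤ M ^ 2 * c + M * d := by linarith
  exact_mod_cast h4

lemma necessity_aux {p : ℚ} (hp : 0 < p) (hirr : Irrational (Real.sqrt p))
    {R : Set (ℝ × ℝ)} {ratios : Set ℝ} {W H : ℝ} (hR : IsRect R W H)
    (hT : TiledBy R ratios) {M₀ : ℚ} (hM₀ : 0 < M₀) (hM₀p : p * M₀ ^ 2 < 1)
    (hsub : ratios ⊆ GoodAux p M₀) :
    W / H ∈ GoodAux p M₀ := by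
  obtain ⟨m, w, h, hw, hh, hr, hsum⟩ := formAux_sum hR hT p
  obtain ⟨hW, hH, -⟩ := hR
  have hr' : ∀ i, w i / h i ∈ GoodAux p M₀ := by
    intro i
    rcases hr i with h1 | h1
    · exact hsub h1
    · have := inv_aux hp hM₀p (hsub h1)
      rwa [inv_div] at this
  have hpos : ∀ M : ℚ, M ≠ 0 → |M| = M₀ → ∀ f : ℝ →ₗ[ℚ] ℝ, 0 ≤ formAux p M f W H := by
    intro M hM hMM f
    rw [← hsum]
    refine Finset.sum_nonneg fun i _ => ?_
    have := formAux_nonneg (M := M) hp hM (by rw [← sq_abs, hMM]; exact hM₀p) f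
      (by rw [hMM]; exact hr' i) (h i)
    rwa [div_mul_cancel₀ _ (hh i).ne'] at this
  have hp1 := hpos M₀ hM₀.ne' (abs_of_pos hM₀)
  have hp2 := hpos (-M₀) (neg_ne_zero.2 hM₀.ne') (by rw [abs_neg, abs_of_pos hM₀])
  obtain ⟨c, d, rfl⟩ := field_aux hp hirr hM₀p hH hp1
  have b1 := bound_aux hp hirr hH c d hp1
  have b2 := bound_aux hp hirr hH c d hp2
  have b1' : 0 ≤ M₀ * c + d := by
    refine nonneg_of_mul_nonneg_right (?_ : 0 ≤ M₀ * _) hM₀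
    linarith
  have b2' : 0 ≤ M₀ * c - d := by
    refine nonneg_of_mul_nonneg_right (?_ : 0 ≤ M₀ * _) hM₀
    linarith
  refine ⟨c, d, by field_simp, ?_, abs_le.2 ⟨by linarith, by linarith⟩⟩
  have hc : 0 ≤ c := nonneg_of_mul_nonneg_right (by linarith : 0 ≤ M₀ * c) hM₀
  refine lt_of_le_of_ne hc ?_
  rintro rfl
  have : d = 0 := by linarith
  subst this
  simp at hW

lemma tiled_union_aux {R₁ R₂ : Set (ℝ × ℝ)} {ratios : Set ℝ} (h₁ : TiledBy R₁ ratios)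
    (h₂ : TiledBy R₂ ratios) (hd : Disjoint (interior R₁) (interior R₂)) :
    TiledBy (R₁ ∪ R₂) ratios := by
  obtain ⟨m, T, w, h, a1, a2, a3, a4⟩ := h₁
  obtain ⟨m', T', w', h', b1, b2, b3, b4⟩ := h₂
  have hsub : ∀ i, interior (T i) ⊆ interior R₁ := fun i =>
    interior_mono (a3 ▸ Set.subset_iUnion T i)
  have hsub' : ∀ i, interior (T' i) ⊆ interior R₂ := fun i =>
    interior_mono (b3 ▸ Set.subset_iUnion T' i)
  refine ⟨m + m', Fin.append T T', Fin.append w w', Fin.append h h', ?_, ?_, ?_, ?_⟩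
  · intro i
    refine Fin.addCases (fun i => ?_) (fun i => ?_) i
    · simpa using a1 i
    · simpa using b1 i
  · intro i
    refine Fin.addCases (fun i => ?_) (fun i => ?_) i
    · simpa using a2 i
    · simpa using b2 i
  · rw [← a3, ← b3]
    ext z
    simp only [Set.mem_iUnion, Set.mem_union]
    constructor
    · rintro ⟨i, hi⟩
      revert hi
      refine Fin.addCases (fun i => ?_) (fun i => ?_) i
      · intro hi
        exact Or.inl ⟨i, by simpa using hi⟩
      · intro hi
        exact Or.inr ⟨i, by simpa using hi⟩
    · rintro (⟨i, hi⟩ | ⟨i, hi⟩)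
      · exact ⟨Fin.castAdd m' i, by simpa using hi⟩
      · exact ⟨Fin.natAdd m i, by simpa using hi⟩
  · intro i j
    refine Fin.addCases (fun i => ?_) (fun i => ?_) i <;>
    refine Fin.addCases (fun j => ?_) (fun j => ?_) j <;> intro hij
    · simpa using a4 (fun h => hij (by rw [h]))
    · simpa using hd.mono (hsub i) (hsub' j)
    · simpa using (hd.mono (hsub j) (hsub' i)).symm
    · simpa using b4 (fun h => hij (by rw [h]))

lemma tiled_swap_aux {R : Set (ℝ × ℝ)} {ratios : Set ℝ} (h₁ : TiledBy R ratios) :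
    TiledBy (Prod.swap ⁻¹' R) ratios := by
  obtain ⟨m, T, w, h, a1, a2, a3, a4⟩ := h₁
  refine ⟨m, fun i => Prod.swap ⁻¹' (T i), h, w, ?_, fun i => (a2 i).symm, ?_, ?_⟩
  · intro i
    obtain ⟨hw, hh, x, y, e⟩ := a1 i
    refine ⟨hh, hw, y, x, ?_⟩
    simp only [e, Set.preimage_swap_prod]
  · rw [← a3, Set.preimage_iUnion]
  · intro i j hij
    have := (a4 hij).preimage (Prod.swap : ℝ × ℝ → ℝ × ℝ)
    have e : ∀ s : Set (ℝ × ℝ), Prod.swap ⁻¹' interior s = interior (Prod.swap ⁻¹' s) := fun s =>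
      (Homeomorph.prodComm ℝ ℝ).preimage_interior s
    rwa [e, e] at this

/-- every rectangle with width/height equal to `z` can be tiled -/
def TAux (ratios : Set ℝ) (z : ℝ) : Prop :=
  0 < z ∧ ∀ x y h : ℝ, 0 < h → TiledBy (Set.Icc x (x + z * h) ×ˢ Set.Icc y (y + h)) ratios

lemma TAux_base {ratios : Set ℝ} {z : ℝ} (hz : 0 < z) (h : z ∈ ratios) : TAux ratios z := by
  refine ⟨hz, fun x y h hh => ⟨1, fun _ => Set.Icc x (x + z * h) ×ˢ Set.Icc y (y + h),
    fun _ => z * h, fun _ => h, ?_, ?_, ?_, ?_⟩⟩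
  · exact fun _ => ⟨by positivity, hh, x, y, rfl⟩
  · intro _
    left
    rwa [mul_div_cancel_right₀ _ hh.ne']
  · exact Set.iUnion_const _
  · intro i j hij
    exact absurd (Subsingleton.elim i j) hij

lemma TAux_inv {ratios : Set ℝ} {z : ℝ} (h : TAux ratios z) : TAux ratios z⁻¹ := by
  refine ⟨inv_pos.2 h.1, fun x y k hk => ?_⟩
  have hz := h.1
  have := tiled_swap_aux (h.2 y x (z⁻¹ * k) (by positivity))
  rwa [Set.preimage_swap_prod, mul_inv_cancel_left₀ hz.ne'] at this

lemma TAux_add {ratios : Set ℝ} {z z' : ℝ} (h : TAux ratios z) (h' : TAux ratios z') :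
    TAux ratios (z + z') := by
  refine ⟨add_pos h.1 h'.1, fun x y k hk => ?_⟩
  have h1 := mul_pos h.1 hk
  have h2 := mul_pos h'.1 hk
  have := tiled_union_aux (h.2 x y k hk) (h'.2 (x + z * k) y k hk) ?_
  · rwa [← Set.union_prod, Set.Icc_union_Icc_eq_Icc (by linarith) (by linarith), add_assoc,
      ← add_mul] at this
  · simp only [interior_prod_eq, interior_Icc]
    rw [Set.disjoint_left]
    rintro ⟨u, v⟩ ⟨⟨_, h1⟩, _⟩ ⟨⟨h2, _⟩, _⟩
    exact absurd h1 (not_lt.2 h2.le)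

lemma TAux_nat {ratios : Set ℝ} {z : ℝ} (h : TAux ratios z) (n : ℕ) :
    TAux ratios ((n + 1 : ℕ) * z) := by
  induction n with
  | zero => simpa using h
  | succ n ih =>
    have := TAux_add ih h
    convert this using 1
    push_cast
    ring

lemma TAux_nat' {ratios : Set ℝ} {z : ℝ} (h : TAux ratios z) (n : ℕ) (hn : 0 < n) :
    TAux ratios (n * z) := by
  obtain ⟨m, rfl⟩ := Nat.exists_eq_succ_of_ne_zero hn.ne'
  exact TAux_nat h m

lemma TAux_rat {ratios : Set ℝ} {z : ℝ} (h : TAux ratios z) (q : ℚ) (hq : 0 < q) :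
    TAux ratios (q * z) := by
  have h1 := TAux_inv (TAux_nat' (TAux_inv h) q.den q.den_pos)
  have hnum : 0 < q.num := Rat.num_pos.2 hq
  have h2 := TAux_nat' h1 q.num.toNat (by omega)
  convert h2 using 1
  have e : ((q.num.toNat : ℕ) : ℝ) = (q.num : ℝ) := by
    have : ((q.num.toNat : ℕ) : ℤ) = q.num := Int.toNat_of_nonneg hnum.le
    exact_mod_cast congrArg (fun t : ℤ => (t : ℝ)) this
  rw [e, mul_inv, inv_inv, ← mul_assoc, ← div_eq_mul_inv]
  congr 1
  exact Rat.cast_def q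

lemma TAux_comb {ratios : Set ℝ} {z z' : ℝ} (h : TAux ratios z) (h' : TAux ratios z')
    (s t : ℚ) (hs : 0 ≤ s) (ht : 0 ≤ t) (hst : 0 < s + t) :
    TAux ratios (s * z + t * z') := by
  rcases hs.eq_or_lt with rfl | hs
  · have : 0 < t := by linarith
    simpa using TAux_rat h' t this
  rcases ht.eq_or_lt with rfl | ht
  · simpa using TAux_rat h s hs
  exact TAux_add (TAux_rat h s hs) (TAux_rat h' t ht)

lemma sufficiency_aux {p : ℚ} (hp : 0 < p) {a b c d : ℚ}
    (hx : 0 < (a : ℝ) + b * Real.sqrt p) (hx' : 0 < (a : ℝ) - b * Real.sqrt p)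
    (hc : 0 < c) (hd : |d| ≤ |b| / a * c) :
    TAux {(a : ℝ) + b * Real.sqrt p} (c + d * Real.sqrt p) := by
  have ha : 0 < a := by
    have : (0 : ℝ) < a := by linarith
    exact_mod_cast this
  have hs : Real.sqrt p ^ 2 = p := Real.sq_sqrt (by exact_mod_cast hp.le)
  have h1 : TAux {(a : ℝ) + b * Real.sqrt p} ((a : ℝ) + b * Real.sqrt p) := TAux_base hx rfl
  have hN : ((a ^ 2 - p * b ^ 2 : ℚ) : ℝ) =
      ((a : ℝ) - b * Real.sqrt p) * ((a : ℝ) + b * Real.sqrt p) := by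
    push_cast
    linear_combination (b ^ 2 : ℝ) * hs
  have hN0 : 0 < a ^ 2 - p * b ^ 2 := by
    have := mul_pos hx' hx
    rw [← hN] at this
    exact_mod_cast this
  have h2 := TAux_rat (TAux_inv h1) _ hN0
  rw [hN, mul_inv_cancel_right₀ hx.ne'] at h2
  have hca : 0 < c / a := by positivity
  have hab : |d / b| ≤ c / a := by
    rcases eq_or_ne b 0 with rfl | hb
    · simpa using hca.le
    · rw [abs_div, div_le_iff₀ (abs_pos.2 hb)]
      calc |d| ≤ |b| / a * c := hd
        _ = c / a * |b| := by ring
  have hdb : d / b * b = d := by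
    rcases eq_or_ne b 0 with rfl | hb
    · simp at hd
      simp [hd]
    · field_simp
  have := TAux_comb h1 h2 ((c / a + d / b) / 2) ((c / a - d / b) / 2)
    (by linarith [neg_abs_le (d / b)]) (by linarith [le_abs_self (d / b)]) (by linarith)
  convert this using 1
  have e1 : (c : ℝ) / a * a = c := div_mul_cancel₀ _ (by exact_mod_cast ha.ne')
  have e2 : (d : ℝ) / b * b = d := by exact_mod_cast hdb
  push_cast
  linear_combination - e1 - Real.sqrt p * e2

lemma TiledBy_mono_aux {R : Set (ℝ × ℝ)} {s t : Set ℝ} (hst : s ⊆ t) (h : TiledBy R s) :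
    TiledBy R t := by
  obtain ⟨m, T, w, h, a1, a2, a3, a4⟩ := h
  exact ⟨m, T, w, h, a1, fun i => (a2 i).imp (@hst _) (@hst _), a3, a4⟩

/-- If all conjugates are positive and `k` realizes `max |bᵢ|/aᵢ`, then
`B(x₁, …, xₙ) = B(x_k)`. -/
theorem stmt_14 (p : ℚ) (hp : 0 < p) (hirr : Irrational (Real.sqrt p))
    (n : ℕ) (a b : Fin n → ℚ) (x : Fin n → ℝ)
    (hx : ∀ i, x i = (a i : ℝ) + (b i : ℝ) * Real.sqrt p)
    (hxpos : ∀ i, 0 < x i)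
    (hconj : ∀ i, 0 < (a i : ℝ) - (b i : ℝ) * Real.sqrt p)
    (k : Fin n) (hk : ∀ i, |b i| / a i ≤ |b k| / a k) :
    BSet (Set.range x) = BSet {x k} := by
  apply Set.Subset.antisymm
  swap
  · rintro z ⟨W, H, R, hR, hz, hT⟩
    exact ⟨W, H, R, hR, hz, TiledBy_mono_aux (by rintro _ rfl; exact ⟨k, rfl⟩) hT⟩
  rintro z ⟨W, H, R, hR, hz, hT⟩
  have ha : ∀ i, 0 < a i := by
    intro i
    have h1 := hxpos i
    rw [hx] at h1
    have h2 := hconj i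
    have : (0 : ℝ) < a i := by linarith
    exact_mod_cast this
  have hs : Real.sqrt p ^ 2 = p := Real.sq_sqrt (by exact_mod_cast hp.le)
  -- the bound for every admissible M
  have hnec : ∀ M : ℚ, 0 < M → |b k| / a k ≤ M → p * M ^ 2 < 1 → W / H ∈ GoodAux p M := by
    intro M hM hkM hpM
    refine necessity_aux hp hirr hR hT hM hpM ?_
    rintro _ ⟨i, rfl⟩
    refine ⟨a i, b i, hx i, ha i, ?_⟩
    rw [← div_le_iff₀ (ha i)]
    exact (hk i).trans hkM
  have hWH : W / H ∈ GoodAux p (|b k| / a k) := by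
    rcases eq_or_ne (b k) 0 with hb | hb
    · rw [hb, abs_zero, zero_div] at hnec ⊢
      have hsmall : ∀ M : ℚ, 0 < M → M ≤ 1 / (p + 1) → W / H ∈ GoodAux p M := by
        intro M hM hM1
        refine hnec M hM hM.le ?_
        rw [le_div_iff₀ (by linarith)] at hM1
        have : M ≤ 1 := by nlinarith
        nlinarith [mul_pos hp hM]
      obtain ⟨c, d, e, hc, -⟩ := hsmall (1 / (p + 1)) (by positivity) le_rfl
      refine ⟨c, d, e, hc, ?_⟩
      rw [zero_mul]
      by_contra hd
      push Not at hd
      have hM : 0 < min (1 / (p + 1)) (|d| / (2 * c)) := lt_min (by positivity) (by positivity)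
      obtain ⟨c', d', e', hc', hd'⟩ := hsmall _ hM (min_le_left _ _)
      have : ((c - c' : ℚ) : ℝ) + (d - d' : ℚ) * Real.sqrt p = 0 := by
        push_cast
        linarith
      obtain ⟨h1, h2⟩ := irr_aux hirr this
      have h1 : c' = c := by linarith
      have h2 : d' = d := by linarith
      subst h1 h2
      have h3 := hd'.trans (mul_le_mul_of_nonneg_right (min_le_right _ _) hc.le)
      have h4 : |d'| / (2 * c') * c' = |d'| / 2 := by field_simp
      rw [h4] at h3
      linarith
    · refine hnec _ (div_pos (abs_pos.2 hb) (ha k)) le_rfl ?_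
      have h1 := mul_pos (hconj k) (hxpos k)
      rw [hx] at h1
      have h2 : (0 : ℝ) < a k ^ 2 - p * b k ^ 2 := by
        refine h1.trans_eq ?_
        linear_combination (-b k ^ 2 : ℝ) * hs
      have h3 : 0 < a k ^ 2 - p * b k ^ 2 := by exact_mod_cast h2
      have h4 := ha k
      rw [div_pow, sq_abs, ← mul_div_assoc, div_lt_one (by positivity)]
      linarith
  obtain ⟨c, d, e, hc, hd⟩ := hWH
  have hxk := hxpos k
  rw [hx] at hxk
  have hT' := sufficiency_aux hp hxk (hconj k) hc hd
  rw [← e, ← hx] at hT'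
  obtain ⟨hW, hH, -⟩ := hR
  refine ⟨W, H, Set.Icc 0 (0 + W) ×ˢ Set.Icc 0 (0 + H), ⟨hW, hH, 0, 0, rfl⟩, hz, ?_⟩
  have := hT'.2 0 0 H hH
  rwa [div_mul_cancel₀ _ hH.ne'] at this
end

section
/- Let p be a positive rational number with √p irrational, let a₁, b₁ be rational numbers with x₁ = a₁ + b₁√p > 0 and a₁ − b₁√p > 0 (so a₁ > 0). Let z = e + f√p with e, f ∈ ℚ and z > 0. If z ∉ M(x₁), i.e., it is not the case that (e > 0 and |f|/e ≤ |b₁|/a₁), then z ∉ B(x₁): no rectangle with side ratio z can be tiled by rectangles with side ratio x₁. -/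
lemma finsupp_zero (v : ℝ →₀ ℝ) (hv : ∀ y : ℝ, (v.sum fun a c => if a ≤ y then c else 0) = 0) :
    v = 0 := by
  by_contra hne
  have hs : v.support.Nonempty := Finsupp.support_nonempty_iff.mpr hne
  have h := hv (v.support.min' hs)
  rw [Finsupp.sum, Finset.sum_eq_single (v.support.min' hs)] at h
  · have h2 := v.support.min'_mem hs
    simp at h
    rw [Finsupp.mem_support_iff] at h2
    exact h2 h
  · intro b hb hbne
    rw [if_neg]
    intro hle
    exact hbne (le_antisymm hle (Finset.min'_le _ _ hb))
  · intro hn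
    exact absurd (v.support.min'_mem hs) hn

open Classical in
lemma one_dim {ι : Type*} [Fintype ι] (c a b : ι → ℝ) (hab : ∀ i, a i ≤ b i)
    (h : ∀ y : ℝ, ∑ i, (if a i ≤ y ∧ y < b i then c i else 0) = 0) (F : ℝ → ℝ) :
    ∑ i, c i * (F (b i) - F (a i)) = 0 := by
  set v : ℝ →₀ ℝ := ∑ i, (Finsupp.single (a i) (c i) - Finsupp.single (b i) (c i)) with hvdef
  have key : ∀ G : ℝ → ℝ, Finsupp.linearCombination ℝ G v = ∑ i, (c i * G (a i) - c i * G (b i)) := by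
    intro G
    simp [hvdef, map_sum, map_sub]
  have hv0 : v = 0 := by
    apply finsupp_zero
    intro y
    have h1 := key (fun a => if a ≤ y then 1 else 0)
    rw [Finsupp.linearCombination_apply] at h1
    have h2 : (v.sum fun a c => if a ≤ y then c else 0) =
        v.sum fun i a => a • (if i ≤ y then (1 : ℝ) else 0) := by
      apply Finsupp.sum_congr
      intro i _
      split_ifs <;> simp
    rw [h2, h1]
    refine Eq.trans ?_ (h y)
    apply Finset.sum_congr rfl
    intro i _
    have := hab i
    by_cases h3 : a i ≤ y <;> by_cases h4 : b i ≤ y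
    · simp [h3, h4, not_lt.mpr h4]
    · simp [h3, h4, not_le.mp h4]
    · exact absurd (this.trans h4) h3
    · simp [h3, h4]
  have h5 := key F
  rw [hv0, map_zero] at h5
  have h6 : ∑ i, c i * (F (b i) - F (a i)) = -∑ i, (c i * F (a i) - c i * F (b i)) := by
    rw [← Finset.sum_neg_distrib]
    apply Finset.sum_congr rfl
    intro i _
    ring
  rw [h6, ← h5, neg_zero]

open Classical in
lemma one_dim' {m : ℕ} (c a w : Fin m → ℝ) (hw : ∀ i, 0 < w i) (C A W : ℝ) (hW : 0 < W)
    (h : ∀ y : ℝ, ∑ i, (if a i ≤ y ∧ y < a i + w i then c i else 0) =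
      if A ≤ y ∧ y < A + W then C else 0) (g : ℝ →+ ℝ) :
    ∑ i, c i * g (w i) = C * g W := by
  have := one_dim (ι := Option (Fin m)) (fun o => o.elim (-C) c) (fun o => o.elim A a)
    (fun o => o.elim (A + W) (fun i => a i + w i))
    (by rintro (_ | i)
        · simpa using hW.le
        · simpa using (hw i).le)
    (by intro y
        have h1 := h y
        rw [Fintype.sum_option]
        refine (congrArg₂ (· + ·) (rfl : _ = if A ≤ y ∧ y < A + W then -C else 0) h1).trans ?_
        by_cases hc : A ≤ y ∧ y < A + W
        · simp only [if_pos hc]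
          ring
        · simp only [if_neg hc]
          ring) g
  rw [Fintype.sum_option] at this
  simp only [Option.elim, map_add, add_sub_cancel_left] at this
  linarith

lemma halfopen_cover {m : ℕ} (x y w h : Fin m → ℝ) (X Y W H : ℝ)
    (hU : (⋃ i, Set.Icc (x i) (x i + w i) ×ˢ Set.Icc (y i) (y i + h i)) =
      Set.Icc X (X + W) ×ˢ Set.Icc Y (Y + H)) (u v : ℝ)
    (hu : X ≤ u ∧ u < X + W) (hv : Y ≤ v ∧ v < Y + H) :
    ∃ i, (x i ≤ u ∧ u < x i + w i) ∧ (y i ≤ v ∧ v < y i + h i) := by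
  by_contra hcon
  push Not at hcon
  -- each i fails for all small ε
  have hi : ∀ i, ∀ᶠ ε in nhdsWithin (0 : ℝ) (Set.Ioi 0),
      ¬ ((x i ≤ u + ε ∧ u + ε ≤ x i + w i) ∧ (y i ≤ v + ε ∧ v + ε ≤ y i + h i)) := by
    intro i
    have small : ∀ d : ℝ, 0 < d → ∀ᶠ ε in nhdsWithin (0 : ℝ) (Set.Ioi 0), 0 < ε ∧ ε < d :=
      fun d hd => Ioo_mem_nhdsGT hd
    by_cases h1 : x i ≤ u
    · by_cases h2 : u < x i + w i
      · by_cases h3 : y i ≤ v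
        · have := hcon i ⟨h1, h2⟩ h3
          filter_upwards [small 1 one_pos] with ε hε
          rintro ⟨_, _, h5⟩
          linarith [hε.1]
        · filter_upwards [small (y i - v) (by linarith)] with ε hε
          rintro ⟨_, h5, _⟩
          linarith [hε.2]
      · filter_upwards [small 1 one_pos] with ε hε
        rintro ⟨⟨_, h5⟩, _⟩
        linarith [hε.1]
    · filter_upwards [small (x i - u) (by linarith)] with ε hε
      rintro ⟨⟨h5, _⟩, _⟩
      linarith [hε.2]
  have hall := Filter.eventually_all.mpr hi
  have hd : 0 < min (X + W - u) (Y + H - v) := lt_min (by linarith) (by linarith)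
  have hsm : ∀ᶠ ε in nhdsWithin (0 : ℝ) (Set.Ioi 0), ε ∈ Set.Ioo 0 (min (X + W - u) (Y + H - v)) :=
    Ioo_mem_nhdsGT hd
  obtain ⟨ε, h1, h2⟩ := (hall.and hsm).exists
  have h3 := lt_min_iff.mp h2.2
  have h4 : ((u + ε, v + ε) : ℝ × ℝ) ∈ Set.Icc X (X + W) ×ˢ Set.Icc Y (Y + H) := by
    have := h2.1
    refine ⟨⟨?_, ?_⟩, ⟨?_, ?_⟩⟩ <;> simp only <;> linarith [h3.1, h3.2]
  rw [← hU, Set.mem_iUnion] at h4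
  obtain ⟨i, h5, h6⟩ := h4
  exact h1 i ⟨h5, h6⟩

open Classical in
lemma tile_sum (R : Set (ℝ × ℝ)) (W H x : ℝ) (hR : IsRect R W H) (hT : TiledBy R {x}) :
    ∃ (m : ℕ) (w h : Fin m → ℝ), (∀ i, w i = x * h i ∨ h i = x * w i) ∧
      ∀ f g : ℝ →+ ℝ, ∑ i, f (w i) * g (h i) = f W * g H := by
  obtain ⟨hW, hH, X, Y, rfl⟩ := hR
  obtain ⟨m, T, w, h, hrect, hrat, hU, hdis⟩ := hT
  choose hw hh a b hTe using hrect
  refine ⟨m, w, h, ?_, ?_⟩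
  · intro i
    have h1 := hw i
    have h2 := hh i
    rcases hrat i with h3 | h3
    · left
      rw [Set.mem_singleton_iff, div_eq_iff h2.ne'] at h3
      exact h3
    · right
      rw [Set.mem_singleton_iff, div_eq_iff h1.ne'] at h3
      exact h3
  intro f g
  have hU' : (⋃ i, Set.Icc (a i) (a i + w i) ×ˢ Set.Icc (b i) (b i + h i)) =
      Set.Icc X (X + W) ×ˢ Set.Icc Y (Y + H) := by
    rw [← hU]
    exact Set.iUnion_congr fun i => (hTe i).symm
  have hsub : ∀ i, a i ∈ Set.Icc X (X + W) ∧ a i + w i ∈ Set.Icc X (X + W) ∧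
      b i ∈ Set.Icc Y (Y + H) ∧ b i + h i ∈ Set.Icc Y (Y + H) := by
    intro i
    have h1 := hw i
    have h2 := hh i
    have hs : Set.Icc (a i) (a i + w i) ×ˢ Set.Icc (b i) (b i + h i) ⊆
        Set.Icc X (X + W) ×ˢ Set.Icc Y (Y + H) := by
      rw [← hU']
      exact Set.subset_iUnion (fun i => Set.Icc (a i) (a i + w i) ×ˢ Set.Icc (b i) (b i + h i)) i
    have p1 := @hs (a i, b i) ⟨⟨le_rfl, by simp only; linarith⟩, ⟨le_rfl, by simp only; linarith⟩⟩
    have p2 := @hs (a i + w i, b i + h i)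
      ⟨⟨by simp only; linarith, le_rfl⟩, ⟨by simp only; linarith, le_rfl⟩⟩
    exact ⟨p1.1, p2.1, p1.2, p2.2⟩
  have huniq : ∀ (u v : ℝ) (i j : Fin m), ((a i ≤ u ∧ u < a i + w i) ∧ (b i ≤ v ∧ v < b i + h i)) →
      ((a j ≤ u ∧ u < a j + w j) ∧ (b j ≤ v ∧ v < b j + h j)) → i = j := by
    intro u v i j hi hj
    by_contra hij
    have hd := hdis hij
    simp only [hTe, interior_prod_eq, interior_Icc] at hd
    obtain ⟨s, hs1, hs2⟩ := exists_between (lt_min hi.1.2 hj.1.2)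
    obtain ⟨t, ht1, ht2⟩ := exists_between (lt_min hi.2.2 hj.2.2)
    rw [lt_min_iff] at hs2 ht2
    have hd2 := Set.disjoint_left.mp hd
    exact @hd2 (s, t)
      ⟨⟨lt_of_le_of_lt hi.1.1 hs1, hs2.1⟩, ⟨lt_of_le_of_lt hi.2.1 ht1, ht2.1⟩⟩
      ⟨⟨lt_of_le_of_lt hj.1.1 hs1, hs2.2⟩, ⟨lt_of_le_of_lt hj.2.1 ht1, ht2.2⟩⟩
  have hpt : ∀ u v : ℝ, ∑ i, (if a i ≤ u ∧ u < a i + w i then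
      (if b i ≤ v ∧ v < b i + h i then (1 : ℝ) else 0) else 0) =
      if X ≤ u ∧ u < X + W then (if Y ≤ v ∧ v < Y + H then (1 : ℝ) else 0) else 0 := by
    intro u v
    by_cases hin : (X ≤ u ∧ u < X + W) ∧ (Y ≤ v ∧ v < Y + H)
    · obtain ⟨i, hi⟩ := halfopen_cover a b w h X Y W H hU' u v hin.1 hin.2
      rw [if_pos hin.1, if_pos hin.2, Finset.sum_eq_single i, if_pos hi.1, if_pos hi.2]
      · intro j _ hj
        by_contra hne
        apply hj
        refine huniq u v j i ?_ hi
        by_contra hc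
        apply hne
        split_ifs with c1 c2
        · exact absurd ⟨c1, c2⟩ hc
        · rfl
        · rfl
      · simp
    · have hr : (if X ≤ u ∧ u < X + W then (if Y ≤ v ∧ v < Y + H then (1 : ℝ) else 0) else 0) = 0 := by
        split_ifs with c1 c2
        · exact absurd ⟨c1, c2⟩ hin
        · rfl
        · rfl
      rw [hr]
      apply Finset.sum_eq_zero
      intro i _
      split_ifs with c1 c2
      · exfalso
        obtain ⟨q1, q2, q3, q4⟩ := hsub i
        exact hin ⟨⟨q1.1.trans c1.1, c1.2.trans_le q2.2⟩, ⟨q3.1.trans c2.1, c2.2.trans_le q4.2⟩⟩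
      · rfl
      · rfl
  have step1 : ∀ v : ℝ, ∑ i, (if b i ≤ v ∧ v < b i + h i then (1 : ℝ) else 0) * f (w i) =
      (if Y ≤ v ∧ v < Y + H then (1 : ℝ) else 0) * f W := fun v =>
    one_dim' (fun i => if b i ≤ v ∧ v < b i + h i then (1 : ℝ) else 0) a w hw
      (if Y ≤ v ∧ v < Y + H then (1 : ℝ) else 0) X W hW (fun u => hpt u v) f
  refine one_dim' (fun i => f (w i)) b h hh (f W) Y H hH (fun v => ?_) g
  have := step1 v
  simpa only [ite_mul, one_mul, zero_mul] using this

lemma core {m : ℕ} (w h : Fin m → ℝ) (W H x x' z z' : ℝ) (hx' : 0 < x') (hxx : x' ≤ x)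
    (hr : ∀ i, w i = x * h i ∨ h i = x * w i)
    (hs : ∀ f g : ℝ →+ ℝ, ∑ i, f (w i) * g (h i) = f W * g H)
    (S : ℝ →+ ℝ) (hS : ∀ t, S (x * t) = x' * S t) (hH : 0 < H) (hSH : S H = H)
    (hWz : W = z * H) (hSW : S W = z' * H) : x' * z ≤ x * z' ∧ x' * z' ≤ x * z := by
  have e1 := hs (AddMonoidHom.id ℝ) (AddMonoidHom.id ℝ)
  have e2 := hs S S
  have e3 := hs (AddMonoidHom.id ℝ) S
  have e4 := hs S (AddMonoidHom.id ℝ)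
  simp only [AddMonoidHom.id_apply] at e1 e2 e3 e4
  have hx : 0 < x := by linarith
  have b1 : ∀ i, 0 ≤ x' * (w i * h i) + x * (S (w i) * S (h i)) - 2 * x' * (w i * S (h i)) := by
    intro i
    rcases hr i with h1 | h1
    · rw [h1, hS]
      have : 0 ≤ x * x' * (h i - S (h i)) ^ 2 := by positivity
      nlinarith
    · rw [h1, hS]
      have q1 : 0 ≤ x' * (x - x') * (w i ^ 2 + S (w i) ^ 2) := by
        have := sub_nonneg.mpr hxx
        positivity
      have q2 : 0 ≤ x' * x' * (w i - S (w i)) ^ 2 := by positivity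
      nlinarith
  have b2 : ∀ i, 0 ≤ x' * (S (w i) * S (h i)) + x * (w i * h i) - 2 * x' * (S (w i) * h i) := by
    intro i
    rcases hr i with h1 | h1
    · rw [h1, hS]
      have q1 : 0 ≤ (x ^ 2 - x' ^ 2) * (h i ^ 2) := by
        have : 0 ≤ x ^ 2 - x' ^ 2 := by nlinarith
        positivity
      have q2 : 0 ≤ x' * x' * (h i - S (h i)) ^ 2 := by positivity
      nlinarith
    · rw [h1, hS]
      have q2 : 0 ≤ (x * w i - x' * S (w i)) ^ 2 := by positivity
      nlinarith
  have s1 := Finset.sum_nonneg (s := Finset.univ) (fun i _ => b1 i)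
  have s2 := Finset.sum_nonneg (s := Finset.univ) (fun i _ => b2 i)
  simp only [Finset.sum_sub_distrib, Finset.sum_add_distrib, ← Finset.mul_sum] at s1 s2
  rw [e1, e2, e3, hSH, hSW, hWz] at s1
  rw [e1, e2, e4, hSH, hSW, hWz] at s2
  have hHH : 0 < H * H := by positivity
  constructor
  · by_contra hc
    push Not at hc
    nlinarith [mul_pos hHH (sub_pos.mpr hc)]
  · by_contra hc
    push Not at hc
    nlinarith [mul_pos hHH (sub_pos.mpr hc)]

lemma exists_conj (p : ℚ) (hp : 0 < p) (hirr : Irrational (Real.sqrt p)) (H : ℝ) (hH : 0 < H) :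
    ∃ S : ℝ →+ ℝ, S H = H ∧ ∀ (a b : ℚ) (t : ℝ),
      S (((a : ℝ) + b * Real.sqrt p) * t) = ((a : ℝ) - b * Real.sqrt p) * S t := by
  have hq : 0 < Real.sqrt p := Real.sqrt_pos.mpr (by exact_mod_cast hp)
  have hqq : Real.sqrt p * Real.sqrt p = p := Real.mul_self_sqrt (by exact_mod_cast hp.le)
  set q := Real.sqrt p with hqdef
  have hli : LinearIndependent ℚ ![(1 : ℝ), q] := by
    rw [LinearIndependent.pair_iff]
    intro s t hst
    rw [Rat.smul_def, Rat.smul_def] at hst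
    have ht : t = 0 := by
      by_contra ht
      have ht' : (t : ℝ) ≠ 0 := by exact_mod_cast ht
      apply hirr
      refine ⟨-s / t, ?_⟩
      push_cast
      field_simp
      linarith
    subst ht
    simp at hst
    exact ⟨hst, rfl⟩
  obtain ⟨g, hg1, hgq⟩ : ∃ g : ℝ →ₗ[ℚ] ℚ, g 1 = 1 ∧ g q = 0 := by
    let B := Module.Basis.span hli
    obtain ⟨g, hg⟩ := LinearMap.exists_extend (B.constr ℚ ![(1 : ℚ), 0])
    refine ⟨g, ?_, ?_⟩
    · have h1 := B.constr_basis ℚ ![(1 : ℚ), 0] 0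
      rw [← hg] at h1
      simpa [B, Module.Basis.span_apply] using h1
    · have h1 := B.constr_basis ℚ ![(1 : ℚ), 0] 1
      rw [← hg] at h1
      simpa [B, Module.Basis.span_apply] using h1
  let S₀ : ℝ → ℝ := fun t => (g t : ℝ) - (g (q * t) : ℝ) / q
  have hadd : ∀ s t, S₀ (s + t) = S₀ s + S₀ t := by
    intro s t
    simp only [S₀, mul_add, map_add]
    push_cast
    ring
  have hrat : ∀ (a : ℚ) (t : ℝ), g (a * t) = a * g t := by
    intro a t
    rw [← Rat.smul_def, map_smul, smul_eq_mul]
  have hmul : ∀ (a b : ℚ) (t : ℝ), S₀ (((a : ℝ) + b * q) * t) = ((a : ℝ) - b * q) * S₀ t := by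
    intro a b t
    have r1 : g (((a : ℝ) + b * q) * t) = a * g t + b * g (q * t) := by
      rw [← hrat, ← hrat, ← map_add]
      congr 1
      ring
    have r2 : g (q * (((a : ℝ) + b * q) * t)) = a * g (q * t) + b * (p * g t) := by
      rw [← hrat, ← hrat, ← hrat, ← map_add]
      congr 1
      rw [← hqq]
      ring
    simp only [S₀]
    rw [r1, r2]
    push_cast
    rw [← hqq]
    field_simp
    ring
  refine ⟨AddMonoidHom.mk' (fun t => H * S₀ (t / H)) ?_, ?_, ?_⟩
  · intro s t
    rw [add_div, hadd, mul_add]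
  · have : S₀ 1 = 1 := by simp [S₀, hg1, hgq]
    simp [div_self hH.ne', this]
  · intro a b t
    simp only [AddMonoidHom.mk'_apply]
    rw [mul_div_assoc, hmul]
    ring

lemma main_ineq {m : ℕ} (w h : Fin m → ℝ) (W H : ℝ) (p : ℚ) (hp : 0 < p)
    (hirr : Irrational (Real.sqrt p))
    (a b : ℚ) (hxpos : 0 < (a : ℝ) + (b : ℝ) * Real.sqrt p)
    (hconj : 0 < (a : ℝ) - (b : ℝ) * Real.sqrt p)
    (e f : ℚ) (hzpos : 0 < (e : ℝ) + (f : ℝ) * Real.sqrt p)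
    (hr : ∀ i, w i = ((a : ℝ) + (b : ℝ) * Real.sqrt p) * h i ∨
      h i = ((a : ℝ) + (b : ℝ) * Real.sqrt p) * w i)
    (hs : ∀ f g : ℝ →+ ℝ, ∑ i, f (w i) * g (h i) = f W * g H)
    (hH : 0 < H) (hWz : W = ((e : ℝ) + (f : ℝ) * Real.sqrt p) * H) :
    0 < e ∧ |f| / e ≤ |b| / a := by
  obtain ⟨S, hSH, hS⟩ := exists_conj p hp hirr H hH
  have hq : 0 < Real.sqrt p := Real.sqrt_pos.mpr (by exact_mod_cast hp)
  set q := Real.sqrt p with hqdef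
  have hSW : S W = ((e : ℝ) - f * q) * H := by rw [hWz, hS, hSH]
  set x := (a : ℝ) + b * q with hxdef
  set x' := (a : ℝ) - b * q with hx'def
  set z := (e : ℝ) + f * q with hzdef
  set z' := (e : ℝ) - f * q with hz'def
  have ha : (0 : ℝ) < a := by linarith
  have main : (x' * z ≤ x * z' ∧ x' * z' ≤ x * z) ∨ (x * z ≤ x' * z' ∧ x * z' ≤ x' * z) := by
    rcases le_total x' x with hle | hle
    · left
      exact core w h W H x x' z z' hconj hle hr hs S (fun t => hS a b t) hH hSH hWz hSW
    · right
      have hr' : ∀ i, w i = x⁻¹ * h i ∨ h i = x⁻¹ * w i := by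
        intro i
        rcases hr i with h1 | h1
        · right
          rw [h1, inv_mul_cancel_left₀ hxpos.ne']
        · left
          rw [h1, inv_mul_cancel_left₀ hxpos.ne']
      have hS' : ∀ t, S (x⁻¹ * t) = x'⁻¹ * S t := by
        intro t
        have := hS a b (x⁻¹ * t)
        rw [← hxdef, mul_inv_cancel_left₀ hxpos.ne'] at this
        rw [this, inv_mul_cancel_left₀ hconj.ne']
      obtain ⟨c1, c2⟩ := core w h W H x⁻¹ x'⁻¹ z z' (inv_pos.mpr hconj)
        (inv_anti₀ hxpos hle) hr' hs S hS' hH hSH hWz hSW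
      field_simp at c1 c2
      constructor <;> linarith
  have hz' : 0 < z' := by
    rcases main with ⟨c1, _⟩ | ⟨c1, _⟩
    · exact pos_of_mul_pos_right (lt_of_lt_of_le (mul_pos hconj hzpos) c1) hxpos.le
    · exact pos_of_mul_pos_right (lt_of_lt_of_le (mul_pos hxpos hzpos) c1) hconj.le
  have he : (0 : ℝ) < e := by linarith
  have haQ : 0 < a := by exact_mod_cast ha
  have heQ : 0 < e := by exact_mod_cast he
  refine ⟨heQ, ?_⟩
  rw [div_le_div_iff₀ heQ haQ]
  have fin : |(f : ℝ)| * a ≤ |(b : ℝ)| * e := by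
    have k : ∀ s : ℝ, 0 ≤ s * q → 0 ≤ s := fun s hs => nonneg_of_mul_nonneg_left hs hq
    rcases main with ⟨c1, c2⟩ | ⟨c1, c2⟩
    · have d1 := k (b * e - f * a) (by simp only [hxdef, hx'def, hzdef, hz'def] at c1; nlinarith)
      have d2 := k (b * e + f * a) (by simp only [hxdef, hx'def, hzdef, hz'def] at c2; nlinarith)
      have d3 := mul_le_mul_of_nonneg_right (le_abs_self (b : ℝ)) he.le
      rcases abs_cases (f : ℝ) with ⟨h1, _⟩ | ⟨h1, _⟩ <;> rw [h1] <;> linarith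
    · have d1 := k (-b * e - f * a) (by simp only [hxdef, hx'def, hzdef, hz'def] at c1; nlinarith)
      have d2 := k (-b * e + f * a) (by simp only [hxdef, hx'def, hzdef, hz'def] at c2; nlinarith)
      have d3 := mul_le_mul_of_nonneg_right (neg_le_abs (b : ℝ)) he.le
      rcases abs_cases (f : ℝ) with ⟨h1, _⟩ | ⟨h1, _⟩ <;> rw [h1] <;> linarith
  exact_mod_cast fin

/-- Impossibility, case of positive conjugate: if `z = e + f√p ∉ M(x₁)`,
then `z ∉ B(x₁)`. -/
theorem stmt_16 (p : ℚ) (hp : 0 < p) (hirr : Irrational (Real.sqrt p))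
    (a₁ b₁ : ℚ) (x₁ : ℝ) (hx : x₁ = (a₁ : ℝ) + (b₁ : ℝ) * Real.sqrt p)
    (hxpos : 0 < x₁) (hconj : 0 < (a₁ : ℝ) - (b₁ : ℝ) * Real.sqrt p)
    (e f : ℚ) (z : ℝ) (hz : z = (e : ℝ) + (f : ℝ) * Real.sqrt p) (hzpos : 0 < z)
    (hnotM : ¬(0 < e ∧ |f| / e ≤ |b₁| / a₁)) :
    z ∉ BSet {x₁} := by
  rintro ⟨W, H, R, hR, hzz, hT⟩
  apply hnotM
  obtain ⟨m, w, h, hr, hs⟩ := tile_sum R W H x₁ hR hT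
  have hW := hR.1
  have hH := hR.2.1
  subst hx hz
  rcases hzz with h1 | h1
  · rw [eq_div_iff hH.ne'] at h1
    exact main_ineq w h W H p hp hirr a₁ b₁ hxpos hconj e f hzpos hr hs hH h1.symm
  · rw [eq_div_iff hW.ne'] at h1
    refine main_ineq h w H W p hp hirr a₁ b₁ hxpos hconj e f hzpos (fun i => (hr i).symm)
      (fun f g => ?_) hW h1.symm
    rw [mul_comm, ← hs g f]
    exact Finset.sum_congr rfl fun i _ => mul_comm _ _
end

section
/- Let p be a positive rational number with √p irrational, let a₁, b₁ be rational numbers with x₁ = a₁ + b₁√p > 0 and a₁ − b₁√p < 0 (so b₁ > 0). Let z = e + f√p with e, f ∈ ℚ and z > 0. If z ∉ N(x₁), i.e., it is not the case that (f > 0 and |e|/f ≤ |a₁|/b₁), then z ∉ B(x₁): no rectangle with side ratio z can be tiled by rectangles with side ratio x₁. -/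
lemma aux_grid (φ : ℝ → ℝ) (X : Finset ℝ) :
    ∃ (S : Finset ℝ) (D : ℝ → ℝ), (∀ m ∈ S, m ∉ X) ∧ (∀ m ∈ S, ∃ x ∈ X, m < x) ∧
      ∀ a ∈ X, ∀ b ∈ X, a ≤ b → ∑ m ∈ S, (if a < m ∧ m < b then D m else 0) = φ b - φ a := by
  classical
  induction X using Finset.induction_on_max with
  | empty => exact ⟨∅, fun _ => 0, by simp, by simp, by simp⟩
  | insert x X hx ih =>
    obtain ⟨S, D, h1, h2, h3⟩ := ih
    rcases X.eq_empty_or_nonempty with rfl | hne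
    · refine ⟨∅, fun _ => 0, by simp, by simp, ?_⟩
      intro a ha b hb _
      simp at ha hb
      simp [ha, hb]
    · set M := X.max' hne with hM
      have hMX : M ∈ X := X.max'_mem hne
      have hle : ∀ y ∈ X, y ≤ M := fun y hy => X.le_max' y hy
      have hMx : M < x := hx M hMX
      have hSM : ∀ m ∈ S, m < M := fun m hm => by
        obtain ⟨y, hy, hmy⟩ := h2 m hm
        exact lt_of_lt_of_le hmy (hle y hy)
      set n := (M + x) / 2 with hn
      have hn1 : M < n := by rw [hn]; linarith
      have hn2 : n < x := by rw [hn]; linarith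
      have hnS : n ∉ S := fun h => by linarith [hSM n h]
      refine ⟨insert n S, fun m => if m = n then φ x - φ M else D m, ?_, ?_, ?_⟩
      · intro m hm
        rw [Finset.mem_insert] at hm ⊢
        rintro (h | h)
        · rcases hm with hm | hm
          · linarith
          · linarith [hSM m hm]
        · rcases hm with hm | hm
          · linarith [hle m h]
          · exact h1 m hm h
      · intro m hm
        rw [Finset.mem_insert] at hm
        refine ⟨x, Finset.mem_insert_self _ _, ?_⟩
        rcases hm with hm | hm
        · linarith
        · linarith [hSM m hm]
      · intro a ha b hb hab
        rw [Finset.sum_insert hnS]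
        have e1 : ∑ m ∈ S, (if a < m ∧ m < b then (if m = n then φ x - φ M else D m) else 0)
            = ∑ m ∈ S, (if a < m ∧ m < b then D m else 0) := by
          refine Finset.sum_congr rfl fun m hm => ?_
          have : m ≠ n := fun h => hnS (h ▸ hm)
          simp [this]
        rw [e1]
        rw [Finset.mem_insert] at ha hb
        rcases hb with rfl | hb
        · rcases ha with rfl | ha
          · have : ∀ m : ℝ, ¬ (a < m ∧ m < a) := fun m h => by linarith [h.1, h.2]
            simp [this]
          · have e2 : ∑ m ∈ S, (if a < m ∧ m < b then D m else 0)
                = ∑ m ∈ S, (if a < m ∧ m < M then D m else 0) := by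
              refine Finset.sum_congr rfl fun m hm => ?_
              have q1 := hSM m hm
              have q2 : m < b := by linarith
              simp [q1, q2]
            rw [e2, h3 a ha M hMX (hle a ha)]
            have : a < n ∧ n < b := ⟨by linarith [hle a ha], hn2⟩
            simp [this]
        · have q := hle b hb
          rcases ha with rfl | ha
          · linarith
          · rw [h3 a ha b hb hab]
            have : ¬ (a < n ∧ n < b) := fun h => by linarith [h.2]
            simp [this]

lemma aux_tile (φ ψ : ℝ →+ ℝ) (R : Set (ℝ × ℝ)) (W H : ℝ) (hR : IsRect R W H)
    (m : ℕ) (T : Fin m → Set (ℝ × ℝ)) (w h : Fin m → ℝ)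
    (hT : ∀ i, IsRect (T i) (w i) (h i)) (hU : (⋃ i, T i) = R)
    (hD : Pairwise fun i j => Disjoint (interior (T i)) (interior (T j))) :
    φ W * ψ H = ∑ i, φ (w i) * ψ (h i) := by
  classical
  obtain ⟨hW, hH, X0, Y0, hR⟩ := hR
  choose hw hh x y hT using hT
  let X : Finset ℝ := insert X0 (insert (X0 + W)
    ((Finset.univ.image x) ∪ (Finset.univ.image fun i => x i + w i)))
  let Y : Finset ℝ := insert Y0 (insert (Y0 + H)
    ((Finset.univ.image y) ∪ (Finset.univ.image fun i => y i + h i)))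
  have hx1 : ∀ i, x i ∈ X := fun i => by simp [X]
  have hx2 : ∀ i, x i + w i ∈ X := fun i => by simp [X]
  have hy1 : ∀ i, y i ∈ Y := fun i => by simp [Y]
  have hy2 : ∀ i, y i + h i ∈ Y := fun i => by simp [Y]
  have hX1 : X0 ∈ X := by simp [X]
  have hX2 : X0 + W ∈ X := by simp [X]
  have hY1 : Y0 ∈ Y := by simp [Y]
  have hY2 : Y0 + H ∈ Y := by simp [Y]
  obtain ⟨S, D, hS, -, hSD⟩ := aux_grid φ X
  obtain ⟨S', D', hS', -, hSD'⟩ := aux_grid ψ Y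
  have key : ∀ a c u v : ℝ, a ∈ X → a + u ∈ X → c ∈ Y → c + v ∈ Y → 0 < u → 0 < v →
      φ u * ψ v = ∑ s ∈ S, ∑ t ∈ S', D s * D' t *
        (if (s, t) ∈ Set.Ioo a (a + u) ×ˢ Set.Ioo c (c + v) then 1 else 0) := by
    intro a c u v ha hau hc hcv hu hv
    have e1 := hSD a ha _ hau (by linarith)
    have e2 := hSD' c hc _ hcv (by linarith)
    have f1 : φ u = φ (a + u) - φ a := by simp
    have f2 : ψ v = ψ (c + v) - ψ c := by simp
    rw [f1, f2, ← e1, ← e2, Finset.sum_mul_sum]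
    refine Finset.sum_congr rfl fun s _ => Finset.sum_congr rfl fun t _ => ?_
    simp only [Set.mem_prod, Set.mem_Ioo]
    by_cases q1 : a < s ∧ s < a + u <;> by_cases q2 : c < t ∧ t < c + v <;> simp [q1, q2]
  have hint : ∀ i, interior (T i) = Set.Ioo (x i) (x i + w i) ×ˢ Set.Ioo (y i) (y i + h i) := by
    intro i; rw [hT i, interior_prod_eq, interior_Icc, interior_Icc]
  rw [key X0 Y0 W H hX1 hX2 hY1 hY2 hW hH]
  simp_rw [fun i =>
    key (x i) (y i) (w i) (h i) (hx1 i) (hx2 i) (hy1 i) (hy2 i) (hw i) (hh i)]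
  symm
  rw [Finset.sum_comm]
  refine Finset.sum_congr rfl fun s hs => ?_
  rw [Finset.sum_comm]
  refine Finset.sum_congr rfl fun t ht => ?_
  rw [← Finset.mul_sum]
  congr 1
  symm
  have nX : ∀ a ∈ X, s ≠ a := fun a ha h => hS s hs (h ▸ ha)
  have nY : ∀ a ∈ Y, t ≠ a := fun a ha h => hS' t ht (h ▸ ha)
  by_cases hin : (s, t) ∈ R
  · have hin' := hin
    rw [← hU, Set.mem_iUnion] at hin'
    obtain ⟨i, hi⟩ := hin'
    have hi' : (s, t) ∈ interior (T i) := by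
      rw [hint i]
      rw [hT i] at hi
      obtain ⟨⟨q1, q2⟩, q3, q4⟩ := hi
      exact ⟨⟨lt_of_le_of_ne q1 (nX _ (hx1 i)).symm, lt_of_le_of_ne q2 (nX _ (hx2 i))⟩,
        lt_of_le_of_ne q3 (nY _ (hy1 i)).symm, lt_of_le_of_ne q4 (nY _ (hy2 i))⟩
    have hin2 : (s, t) ∈ Set.Ioo X0 (X0 + W) ×ˢ Set.Ioo Y0 (Y0 + H) := by
      rw [hR] at hin
      obtain ⟨⟨q1, q2⟩, q3, q4⟩ := hin
      exact ⟨⟨lt_of_le_of_ne q1 (nX _ hX1).symm, lt_of_le_of_ne q2 (nX _ hX2)⟩,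
        lt_of_le_of_ne q3 (nY _ hY1).symm, lt_of_le_of_ne q4 (nY _ hY2)⟩
    rw [if_pos hin2, Finset.sum_eq_single i]
    · rw [if_pos (hint i ▸ hi')]
    · intro j _ hj
      rw [if_neg]
      intro hj'
      rw [← hint j] at hj'
      exact Set.disjoint_left.mp (hD hj) hj' hi'
    · simp
  · rw [if_neg, Finset.sum_eq_zero]
    · intro i _
      rw [if_neg]
      intro hi
      rw [← hint i] at hi
      exact hin (hU ▸ Set.mem_iUnion.mpr ⟨i, interior_subset hi⟩)
    · intro h
      apply hin
      rw [hR]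
      exact ⟨Set.Ioo_subset_Icc_self h.1, Set.Ioo_subset_Icc_self h.2⟩

lemma aux_conj (p : ℚ) (hp : 0 < p) (hirr : Irrational (Real.sqrt p)) (H : ℝ) (hH : 0 < H) :
    ∃ g : ℝ →+ ℝ, g H = H ∧ ∀ (a b : ℚ) (x : ℝ),
      g (((a : ℝ) + b * Real.sqrt p) * x) = ((a : ℝ) - b * Real.sqrt p) * g x := by
  have hp' : (0 : ℝ) < p := by exact_mod_cast hp
  set s := Real.sqrt p with hs
  have hs0 : 0 < s := Real.sqrt_pos.mpr hp'
  have hss : s * s = p := Real.mul_self_sqrt hp'.le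
  have hli : LinearIndependent ℚ ![(1 : ℝ), s] := by
    rw [LinearIndependent.pair_iff]
    intro u v huv
    simp only [Rat.smul_def, mul_one] at huv
    by_cases hv : v = 0
    · subst hv
      simp at huv
      exact ⟨huv, rfl⟩
    · exfalso
      apply hirr
      refine ⟨-u / v, ?_⟩
      have : (v : ℝ) ≠ 0 := by exact_mod_cast hv
      push_cast
      rw [div_eq_iff this]
      linarith
  obtain ⟨k, hk⟩ : ∃ k : ℝ →ₗ[ℚ] ℝ, k 1 = 1 ∧ k s = -s := by
    let B := Module.Basis.extend hli.linearIndepOn_id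
    have m1 : (1 : ℝ) ∈ hli.linearIndepOn_id.extend (Set.subset_univ _) :=
      hli.linearIndepOn_id.subset_extend _ ⟨0, rfl⟩
    have m2 : s ∈ hli.linearIndepOn_id.extend (Set.subset_univ _) :=
      hli.linearIndepOn_id.subset_extend _ ⟨1, rfl⟩
    classical
    let k := B.constr ℚ (fun i => if (i : ℝ) = 1 then (1 : ℝ) else -s)
    have k1 : k (B ⟨1, m1⟩) = 1 := by simp [k, Module.Basis.constr_basis]
    have hs1 : s ≠ 1 := fun h => hirr ⟨1, by simp [h]⟩
    have k2 : k (B ⟨s, m2⟩) = -s := by simp [k, Module.Basis.constr_basis, hs1]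
    refine ⟨k, ?_, ?_⟩
    · simpa [B] using k1
    · simpa [B] using k2
  have kq : ∀ (a : ℚ) (x : ℝ), k ((a : ℝ) * x) = a * k x := by
    intro a x
    rw [← Rat.smul_def, map_smul, Rat.smul_def]
  let g0 : ℝ → ℝ := fun x => (k x - k (s * x) / s) / 2
  have g0add : ∀ x y, g0 (x + y) = g0 x + g0 y := by
    intro x y
    simp only [g0, mul_add, map_add]; ring
  have g0q : ∀ (a : ℚ) (x : ℝ), g0 ((a : ℝ) * x) = a * g0 x := by
    intro a x
    simp only [g0]
    rw [mul_left_comm, kq, kq]; ring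
  have g0s : ∀ x, g0 (s * x) = -s * g0 x := by
    intro x
    simp only [g0]
    rw [← mul_assoc, hss, kq, ← hss]
    field_simp
    ring
  have g01 : g0 1 = 1 := by
    simp only [g0, mul_one, hk]
    field_simp
    norm_num
  let g : ℝ →+ ℝ := AddMonoidHom.mk' (fun x => H * g0 (x / H)) (by
    intro x y; rw [add_div, g0add, mul_add])
  have hg : ∀ x, g x = H * g0 (x / H) := fun x => rfl
  refine ⟨g, ?_, ?_⟩
  · rw [hg, div_self hH.ne', g01, mul_one]
  · intro a b x
    rw [hg, hg, mul_div_assoc, add_mul, g0add, g0q, mul_assoc, g0q, g0s]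
    ring

lemma aux_quad (A C D t u : ℝ) (hA : 0 ≤ A) (hC : 0 ≤ C) (h : D ^ 2 ≤ 4 * A * C) :
    0 ≤ A * t ^ 2 + C * u ^ 2 + D * (t * u) := by
  rcases hA.eq_or_lt with rfl | hA
  · have : D = 0 := by nlinarith
    subst this
    nlinarith [mul_nonneg hC (sq_nonneg u)]
  · have : 0 ≤ A * (A * t ^ 2 + C * u ^ 2 + D * (t * u)) := by
      nlinarith [sq_nonneg (2 * A * t + D * u), mul_nonneg (sub_nonneg.mpr h) (sq_nonneg u)]
    exact nonneg_of_mul_nonneg_right this hA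

lemma aux_main (p : ℚ) (hp : 0 < p)
    (a b : ℚ) (x₁ : ℝ) (hx : x₁ = (a : ℝ) + (b : ℝ) * Real.sqrt p)
    (hxpos : 0 < x₁) (hconj : (a : ℝ) - (b : ℝ) * Real.sqrt p < 0)
    (R : Set (ℝ × ℝ)) (W H : ℝ) (hR : IsRect R W H) (hT : TiledBy R {x₁})
    (g : ℝ →+ ℝ) (hg : ∀ (a b : ℚ) (x : ℝ),
      g (((a : ℝ) + b * Real.sqrt p) * x) = ((a : ℝ) - b * Real.sqrt p) * g x)
    (α β c : ℝ) (hα : 0 ≤ α) (hβ : 0 ≤ β)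
    (hc : c ^ 2 * (b ^ 2 * p) ≤ α * β * (b ^ 2 * p - a ^ 2)) :
    0 ≤ α * (W * H) - β * (g W * g H) + c * (W * g H - g W * H) := by
  have hp' : (0 : ℝ) < p := by exact_mod_cast hp
  have hss : Real.sqrt p * Real.sqrt p = p := Real.mul_self_sqrt hp'.le
  obtain ⟨m, T, w, h, h1, h2, h3, h4⟩ := hT
  have e := fun φ ψ : ℝ →+ ℝ => aux_tile φ ψ R W H hR m T w h h1 h3 h4
  have e1 := e (AddMonoidHom.id ℝ) (AddMonoidHom.id ℝ)
  have e2 := e g g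
  have e3 := e (AddMonoidHom.id ℝ) g
  have e4 := e g (AddMonoidHom.id ℝ)
  simp only [AddMonoidHom.id_apply] at e1 e3 e4
  rw [e1, e2, e3, e4, ← Finset.sum_sub_distrib, Finset.mul_sum, Finset.mul_sum, Finset.mul_sum,
    ← Finset.sum_sub_distrib, ← Finset.sum_add_distrib]
  refine Finset.sum_nonneg fun i _ => ?_
  obtain ⟨hw, hh, -⟩ := h1 i
  set s := Real.sqrt p
  have hA : 0 ≤ α * x₁ := mul_nonneg hα hxpos.le
  have hC : 0 ≤ β * (b * s - a) := mul_nonneg hβ (by linarith)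
  have hdisc : 4 * (c ^ 2 * (b ^ 2 * p)) ≤ 4 * (α * x₁) * (β * (b * s - a)) := by
    rw [hx]
    have : 4 * (α * (a + b * s)) * (β * (b * s - a)) = 4 * (α * β * (b ^ 2 * (s * s) - a ^ 2)) := by
      ring
    rw [this, hss]; linarith
  have hdisc1 : (c * (2 * b * s)) ^ 2 ≤ 4 * (α * x₁) * (β * (b * s - a)) := by
    have : (c * (2 * b * s)) ^ 2 = 4 * (c ^ 2 * (b ^ 2 * (s * s))) := by ring
    rw [this, hss]; exact hdisc
  have hdisc2 : (-(c * (2 * b * s))) ^ 2 ≤ 4 * (α * x₁) * (β * (b * s - a)) := by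
    rw [neg_sq]; exact hdisc1
  rcases h2 i with q | q
  · have q' : w i = x₁ * h i := by
      rw [Set.mem_singleton_iff, div_eq_iff hh.ne'] at q; exact q
    have := aux_quad _ _ _ (h i) (g (h i)) hA hC hdisc1
    have gg : g (w i) = (a - b * s) * g (h i) := by rw [q', hx, hg]
    rw [gg, q', hx]; rw [hx] at this
    linarith
  · have q' : h i = x₁ * w i := by
      rw [Set.mem_singleton_iff, div_eq_iff hw.ne'] at q; exact q
    have := aux_quad _ _ _ (w i) (g (w i)) hA hC hdisc2
    have gg : g (h i) = (a - b * s) * g (w i) := by rw [q', hx, hg]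
    rw [gg, q', hx]; rw [hx] at this
    linarith

/-- Impossibility, case of negative conjugate: if `z = e + f√p ∉ N(x₁)`,
then `z ∉ B(x₁)`. -/
theorem stmt_17 (p : ℚ) (hp : 0 < p) (hirr : Irrational (Real.sqrt p))
    (a₁ b₁ : ℚ) (x₁ : ℝ) (hx : x₁ = (a₁ : ℝ) + (b₁ : ℝ) * Real.sqrt p)
    (hxpos : 0 < x₁) (hconj : (a₁ : ℝ) - (b₁ : ℝ) * Real.sqrt p < 0)
    (e f : ℚ) (z : ℝ) (hz : z = (e : ℝ) + (f : ℝ) * Real.sqrt p) (hzpos : 0 < z)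
    (hnotN : ¬(0 < f ∧ |e| / f ≤ |a₁| / b₁)) :
    z ∉ BSet {x₁} := by
  intro hB
  apply hnotN
  have hp' : (0 : ℝ) < p := by exact_mod_cast hp
  have hss : Real.sqrt p * Real.sqrt p = p := Real.mul_self_sqrt hp'.le
  have hs0 : 0 < Real.sqrt p := Real.sqrt_pos.mpr hp'
  obtain ⟨z', hz'⟩ : ∃ z' : ℝ, z' = (e : ℝ) - f * Real.sqrt p := ⟨_, rfl⟩
  have P : ∀ α β c : ℝ, 0 ≤ α → 0 ≤ β →
      c ^ 2 * (b₁ ^ 2 * p) ≤ α * β * (b₁ ^ 2 * p - a₁ ^ 2) →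
      0 ≤ α * z - β * z' + c * (z - z') := by
    intro α β c hα hβ hc
    obtain ⟨W, H, R, hR, hzz, hT⟩ := hB
    have hW := hR.1
    have hH := hR.2.1
    rcases hzz with q | q
    · obtain ⟨g, g1, g2⟩ := aux_conj p hp hirr H hH
      have := aux_main p hp a₁ b₁ x₁ hx hxpos hconj R W H hR hT g g2 α β c hα hβ hc
      have q' : W = z * H := by rw [q]; field_simp
      have gg : g W = z' * H := by rw [q', hz, g2, g1, hz']
      rw [gg, g1, q'] at this
      refine nonneg_of_mul_nonneg_right (a := H ^ 2) ?_ (by positivity)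
      linarith
    · obtain ⟨g, g1, g2⟩ := aux_conj p hp hirr W hW
      have := aux_main p hp a₁ b₁ x₁ hx hxpos hconj R W H hR hT g g2 α β (-c) hα hβ
        (by rw [neg_sq]; exact hc)
      have q' : H = z * W := by rw [q]; field_simp
      have gg : g H = z' * W := by rw [q', hz, g2, g1, hz']
      rw [gg, g1, q'] at this
      refine nonneg_of_mul_nonneg_right (a := W ^ 2) ?_ (by positivity)
      linarith
  have hd : (0 : ℝ) < b₁ ^ 2 * p - a₁ ^ 2 := by
    have := mul_pos hxpos (neg_pos.mpr hconj)
    rw [hx] at this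
    rw [← sub_pos]
    have e0 : ((a₁ : ℝ) + b₁ * Real.sqrt p) * -(a₁ - b₁ * Real.sqrt p)
        = b₁ ^ 2 * p - a₁ ^ 2 := by linear_combination (b₁ : ℝ) ^ 2 * hss
    linarith
  have hb : (0 : ℝ) < b₁ := by
    have : 0 < (b₁ : ℝ) * Real.sqrt p := by linarith
    exact pos_of_mul_pos_left this hs0.le
  have hz0 : z' ≤ 0 := by
    have := P 0 1 0 le_rfl zero_le_one (by simp)
    linarith
  have hf : (0 : ℝ) < f := by
    have : 0 < (f : ℝ) * Real.sqrt p := by linarith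
    exact pos_of_mul_pos_left this hs0.le
  have hz1 : z' < 0 := by
    refine lt_of_le_of_ne hz0 fun h0 => hirr ⟨e / f, ?_⟩
    push_cast
    rw [div_eq_iff hf.ne']
    linarith
  have hbp : (0 : ℝ) < b₁ ^ 2 * p := by positivity
  obtain ⟨N, hN⟩ : ∃ N : ℝ, N = z * (-z') := ⟨_, rfl⟩
  have hN0 : 0 < N := by rw [hN]; exact mul_pos hzpos (by linarith)
  have hN1 : N = f ^ 2 * p - e ^ 2 := by rw [hN, hz, hz']; linear_combination (f : ℝ) ^ 2 * hss
  obtain ⟨r, hr⟩ : ∃ r : ℝ, r = (b₁ ^ 2 * p - a₁ ^ 2) / (b₁ ^ 2 * p) := ⟨_, rfl⟩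
  have hr0 : 0 < r := by rw [hr]; positivity
  have hrb : r * (b₁ ^ 2 * p) = b₁ ^ 2 * p - a₁ ^ 2 := by rw [hr]; field_simp
  have hq : Real.sqrt (N * r) ^ 2 = N * r := Real.sq_sqrt (by positivity)
  have hq0 : 0 ≤ Real.sqrt (N * r) := Real.sqrt_nonneg _
  have key := P (-z') z (-Real.sqrt (N * r)) (by linarith) hzpos.le (by
    rw [neg_sq, hq, mul_assoc, hrb, hN]; apply le_of_eq; ring)
  have key2 : Real.sqrt (N * r) * (z - z') ≤ 2 * N := by rw [hN] at *; linarith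
  have key3 : (Real.sqrt (N * r) * (z - z')) ^ 2 ≤ (2 * N) ^ 2 :=
    pow_le_pow_left₀ (mul_nonneg hq0 (by linarith)) key2 2
  have e5 : (z - z') ^ 2 = 4 * (f ^ 2 * p) := by rw [hz, hz']; linear_combination 4 * (f : ℝ) ^ 2 * hss
  rw [mul_pow, hq, e5] at key3
  have key4 : r * (f ^ 2 * p) ≤ N := by
    refine le_of_mul_le_mul_left (a := 4 * N) ?_ (by positivity)
    linarith
  have key5 : ((b₁ : ℝ) ^ 2 * p - a₁ ^ 2) * (f ^ 2 * p) ≤ (f ^ 2 * p - e ^ 2) * (b₁ ^ 2 * p) := by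
    rw [← hrb, ← hN1]
    have := mul_le_mul_of_nonneg_right key4 hbp.le
    linarith
  have key6 : ((e : ℝ) * b₁) ^ 2 ≤ (a₁ * f) ^ 2 := by
    refine le_of_mul_le_mul_left (a := (p : ℝ)) ?_ hp'
    linarith
  have hfq : 0 < f := by exact_mod_cast hf
  have hbq : 0 < b₁ := by exact_mod_cast hb
  have key7 : (e * b₁) ^ 2 ≤ (a₁ * f) ^ 2 := by exact_mod_cast key6
  refine ⟨hfq, ?_⟩
  rw [div_le_div_iff₀ hfq hbq]
  have := sq_le_sq.mp key7
  rwa [abs_mul, abs_mul, abs_of_pos hfq, abs_of_pos hbq] at this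
end

section
/- Let p be a positive rational number with √p irrational, and let x₁ = a₁ + b₁√p, …, xₙ = aₙ + bₙ√p where each xᵢ > 0 and all aᵢ, bᵢ are rational. Suppose there exist indices i, j ∈ {1, …, n} with aᵢ − bᵢ√p > 0 and aⱼ − bⱼ√p < 0. Then for all positive rational numbers e and f, the number e + f√p belongs to B(x₁, …, xₙ). -/
theorem TiledBy_union {R1 R2 : Set (ℝ × ℝ)} {s : Set ℝ} (h1 : TiledBy R1 s) (h2 : TiledBy R2 s)
    (hd : Disjoint (interior R1) (interior R2)) : TiledBy (R1 ∪ R2) s := by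
  obtain ⟨m, T, w, h, hr, hs, hu, hp⟩ := h1
  obtain ⟨m', T', w', h', hr', hs', hu', hp'⟩ := h2
  have k1 : ∀ i, interior (T i) ⊆ interior R1 := fun i =>
    interior_mono (hu ▸ Set.subset_iUnion T i)
  have k2 : ∀ i, interior (T' i) ⊆ interior R2 := fun i =>
    interior_mono (hu' ▸ Set.subset_iUnion T' i)
  refine ⟨m + m', Fin.append T T', Fin.append w w', Fin.append h h', ?_, ?_, ?_, ?_⟩
  · intro i
    induction i using Fin.addCases with
    | left i => simpa using hr i
    | right i => simpa using hr' i
  · intro i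
    induction i using Fin.addCases with
    | left i => simpa using hs i
    | right i => simpa using hs' i
  · rw [← hu, ← hu']
    ext z
    simp only [Set.mem_iUnion, Set.mem_union]
    constructor
    · rintro ⟨i, hi⟩
      induction i using Fin.addCases with
      | left i => exact Or.inl ⟨i, by simpa using hi⟩
      | right i => exact Or.inr ⟨i, by simpa using hi⟩
    · rintro (⟨i, hi⟩ | ⟨i, hi⟩)
      · exact ⟨Fin.castAdd m' i, by simpa using hi⟩
      · exact ⟨Fin.natAdd m i, by simpa using hi⟩
  · intro i j hij
    induction i using Fin.addCases with
    | left i =>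
      induction j using Fin.addCases with
      | left j =>
        simp only [Fin.append_left]
        exact hp (fun e => hij (by rw [e]))
      | right j =>
        simp only [Fin.append_left, Fin.append_right]
        exact hd.mono (k1 i) (k2 j)
    | right i =>
      induction j using Fin.addCases with
      | left j =>
        simp only [Fin.append_left, Fin.append_right]
        exact (hd.mono (k1 j) (k2 i)).symm
      | right j =>
        simp only [Fin.append_right]
        exact hp' (fun e => hij (by rw [e]))

def PT (s : Set ℝ) (w h : ℝ) : Prop :=
  ∀ x y : ℝ, TiledBy (Set.Icc x (x + w) ×ˢ Set.Icc y (y + h)) s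

theorem PT_base {s : Set ℝ} {w h : ℝ} (hw : 0 < w) (hh : 0 < h) (hs : w / h ∈ s ∨ h / w ∈ s) :
    PT s w h := by
  intro x y
  refine ⟨1, fun _ => Set.Icc x (x + w) ×ˢ Set.Icc y (y + h), fun _ => w, fun _ => h,
    fun _ => ⟨hw, hh, x, y, rfl⟩, fun _ => hs, Set.iUnion_const _, ?_⟩
  intro i j hij
  exact absurd (Subsingleton.elim i j) hij

theorem PT_hcat {s : Set ℝ} {w1 w2 h : ℝ} (hw1 : 0 < w1) (hw2 : 0 < w2)
    (h1 : PT s w1 h) (h2 : PT s w2 h) : PT s (w1 + w2) h := by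
  intro x y
  have := TiledBy_union (h1 x y) (h2 (x + w1) y) (by
    rw [interior_prod_eq, interior_prod_eq, interior_Icc, interior_Icc, interior_Icc,
      Set.disjoint_left]
    rintro ⟨u, v⟩ ⟨hu, _⟩ ⟨hu', _⟩
    exact lt_asymm hu.2 hu'.1)
  rwa [← Set.union_prod, Set.Icc_union_Icc_eq_Icc (by linarith) (by linarith), add_assoc] at this

theorem PT_vcat {s : Set ℝ} {w1 w2 h : ℝ} (hw1 : 0 < w1) (hw2 : 0 < w2)
    (h1 : PT s h w1) (h2 : PT s h w2) : PT s h (w1 + w2) := by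
  intro x y
  have := TiledBy_union (h1 x y) (h2 x (y + w1)) (by
    rw [interior_prod_eq, interior_prod_eq, interior_Icc, interior_Icc, interior_Icc,
      Set.disjoint_left]
    rintro ⟨u, v⟩ ⟨_, hu⟩ ⟨_, hu'⟩
    exact lt_asymm hu.2 hu'.1)
  rwa [← Set.prod_union, Set.Icc_union_Icc_eq_Icc (by linarith) (by linarith), add_assoc] at this

def SG (s : Set ℝ) (z : ℝ) : Prop :=
  0 < z ∧ ∀ h : ℝ, 0 < h → PT s (z * h) h ∧ PT s h (z * h)

theorem SG_base {s : Set ℝ} {z : ℝ} (hz : 0 < z) (hs : z ∈ s) : SG s z := by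
  refine ⟨hz, fun h hh => ⟨PT_base (by positivity) hh (Or.inl ?_),
    PT_base hh (by positivity) (Or.inr ?_)⟩⟩ <;>
  rwa [mul_div_assoc, div_self hh.ne', mul_one]

theorem SG_add {s : Set ℝ} {z w : ℝ} (hz : SG s z) (hw : SG s w) : SG s (z + w) := by
  refine ⟨add_pos hz.1 hw.1, fun h hh => ?_⟩
  rw [add_mul]
  exact ⟨PT_hcat (mul_pos hz.1 hh) (mul_pos hw.1 hh) (hz.2 h hh).1 (hw.2 h hh).1,
    PT_vcat (mul_pos hz.1 hh) (mul_pos hw.1 hh) (hz.2 h hh).2 (hw.2 h hh).2⟩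

theorem SG_inv {s : Set ℝ} {z : ℝ} (hz : SG s z) : SG s z⁻¹ := by
  have h0 := hz.1
  refine ⟨inv_pos.2 h0, fun h hh => ?_⟩
  have := hz.2 (z⁻¹ * h) (by positivity)
  rw [mul_inv_cancel_left₀ h0.ne'] at this
  exact ⟨this.2, this.1⟩

theorem SG_nat {s : Set ℝ} {z : ℝ} (hz : SG s z) (n : ℕ) : SG s (((n + 1 : ℕ) : ℝ) * z) := by
  induction n with
  | zero => simpa using hz
  | succ n ih =>
    have := SG_add ih hz
    convert this using 1
    push_cast
    ring

theorem SG_nat' {s : Set ℝ} {z : ℝ} (hz : SG s z) (n : ℕ) (hn : 0 < n) : SG s ((n : ℝ) * z) := by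
  obtain ⟨k, rfl⟩ := Nat.exists_eq_succ_of_ne_zero hn.ne'
  exact SG_nat hz k

theorem SG_rat {s : Set ℝ} {z : ℝ} (hz : SG s z) (q : ℚ) (hq : 0 < q) : SG s ((q : ℝ) * z) := by
  have h1 := SG_inv (SG_nat' (SG_inv hz) q.den q.den_pos)
  have hnum : 0 < q.num := Rat.num_pos.2 hq
  have h2 := SG_nat' h1 q.num.toNat (by omega)
  convert h2 using 1
  have e1 : ((q.num.toNat : ℕ) : ℝ) = ((q.num : ℤ) : ℝ) := by
    exact_mod_cast congrArg (Int.cast : ℤ → ℝ) (Int.toNat_of_nonneg hnum.le)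
  rw [e1, Rat.cast_def q, mul_inv, inv_inv, div_eq_mul_inv, mul_assoc]

/-- Existence in the mixed-sign case: if some conjugate is positive and some is
negative, then `e + f√p ∈ B(x₁, …, xₙ)` for all positive rationals `e, f`. -/
theorem stmt_18 (p : ℚ) (hp : 0 < p) (hirr : Irrational (Real.sqrt p))
    (n : ℕ) (a b : Fin n → ℚ) (x : Fin n → ℝ)
    (hx : ∀ i, x i = (a i : ℝ) + (b i : ℝ) * Real.sqrt p)
    (hxpos : ∀ i, 0 < x i)
    (hi : ∃ i : Fin n, 0 < (a i : ℝ) - (b i : ℝ) * Real.sqrt p)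
    (hj : ∃ j : Fin n, (a j : ℝ) - (b j : ℝ) * Real.sqrt p < 0)
    (e f : ℚ) (he : 0 < e) (hf : 0 < f) :
    (e : ℝ) + (f : ℝ) * Real.sqrt p ∈ BSet (Set.range x) := by
  obtain ⟨i, hi⟩ := hi
  obtain ⟨j, hj⟩ := hj
  have hr0 : 0 < Real.sqrt p := Real.sqrt_pos.2 (by exact_mod_cast hp)
  have hrr : Real.sqrt p * Real.sqrt p = p := Real.mul_self_sqrt (by exact_mod_cast hp.le)
  set r := Real.sqrt p with hr
  have gi : SG (Set.range x) (x i) := SG_base (hxpos i) ⟨i, rfl⟩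
  have gj : SG (Set.range x) (x j) := SG_base (hxpos j) ⟨j, rfl⟩
  have pi := hxpos i
  have pj := hxpos j
  have one : SG (Set.range x) 1 := by
    have ha : 0 < a i := by
      have : (0:ℝ) < a i := by rw [hx] at pi; linarith
      exact_mod_cast this
    have hmul : ((a i ^ 2 - p * b i ^ 2 : ℚ) : ℝ) = x i * (a i - b i * r) := by
      rw [hx]; push_cast; rw [← hrr]; ring
    have hN : 0 < a i ^ 2 - p * b i ^ 2 := by
      have := mul_pos pi hi
      rw [← hmul] at this
      exact_mod_cast this
    have h3 := SG_rat (SG_add gi (SG_rat (SG_inv gi) _ hN)) (2 * a i)⁻¹ (by positivity)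
    convert h3 using 1
    have ha' : (a i : ℝ) ≠ 0 := by exact_mod_cast ha.ne'
    rw [hmul, mul_comm (x i), mul_inv_cancel_right₀ pi.ne', hx]
    push_cast
    field_simp
    ring
  have sq : SG (Set.range x) r := by
    have hb : 0 < b j := by
      have : (0:ℝ) < b j * r := by rw [hx] at pj; linarith
      have := pos_of_mul_pos_left this hr0.le
      exact_mod_cast this
    have hmul : ((p * b j ^ 2 - a j ^ 2 : ℚ) : ℝ) = x j * (b j * r - a j) := by
      rw [hx]; push_cast; rw [← hrr]; ring
    have hN : 0 < p * b j ^ 2 - a j ^ 2 := by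
      have := mul_pos pj (by linarith : 0 < b j * r - a j)
      rw [← hmul] at this
      exact_mod_cast this
    have h3 := SG_rat (SG_add gj (SG_rat (SG_inv gj) _ hN)) (2 * b j)⁻¹ (by positivity)
    convert h3 using 1
    have hb' : (b j : ℝ) ≠ 0 := by exact_mod_cast hb.ne'
    rw [hmul, mul_comm (x j), mul_inv_cancel_right₀ pj.ne', hx]
    push_cast
    field_simp
    ring
  have fin := SG_add (SG_rat one e he) (SG_rat sq f hf)
  rw [mul_one] at fin
  refine ⟨((e : ℝ) + f * r) * 1, 1, _, ⟨by simpa using fin.1, one_pos, 0, 0, rfl⟩,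
    Or.inl (by simp), (fin.2 1 one_pos).1 0 0⟩
end
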